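/- arXiv:1411.1826 — 2 statements merged into one kernel-verified Lean document; each statement's English description precedes it below -/
import Mathlib

section
/- Let Ω and Ω' be open bounded convex sets in ℝⁿ with their Hilbert metrics and let τ: Ω → Ω' be an isometry. If L is an extreme line in Ω, then τ(L) is an extreme line in Ω'. -/
/-!
The maximal chords of a convex domain, parametrized by `t ↦ lineMap α β (sigmoid t)`, are unit speed
geodesics for the Hilbert metric (`Chord.dist_geo`). The argument rests on three facts.

*Rigidity.* Bounding the Hilbert metric from below by the quotients of supporting affine functions
at the ends shows that a metric geodesic between two points of a chord with an extreme end must be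
the segment (`rigid_right`, `rigid`). Straight segments are geodesics in the image domain, so their
preimages are as well, and an isometry maps every chord with at least one extreme end onto a chord
(`IsHilbertIsometry.exists_chord`).

*Focusing.* Let `(q, p)` be a chord with `q` extreme, and `(s, p)` another chord whose image is a
chord. Chords from `q` to points `x` of `(s, p)` have straight images; letting `x` tend to `p` and
using the continuity of the isometry, the images of `(q, p)` and `(s, p)` end at the same boundary
point (`IsHilbertIsometry.focus`).

*Extremality of the image ends.* Suppose both ends of `(q, p)` are extreme and the image end `q'`
is interior to a segment in the closure of `Ω'`. Moving `q'` a little in this segment gives a chord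
`(q'', p')` that stays at bounded Hilbert distance from `(q', p')`. By focusing it is the image of a
chord `(s, p)`, which therefore stays at bounded distance from `(q, p)`. Boundedness forces the
segment from `s` to `q` to be prolongable beyond `q` in the closure of `Ω`, so `s = q` because `q`
is extreme, whence `q'' = q'`, a contradiction (`IsHilbertIsometry.extreme`).
-/

open Set
open scoped LinearAlgebra.Projectivization
open scoped Classical

noncomputable section

abbrev Euc (n : ℕ) := EuclideanSpace ℝ (Fin n)

/-- `α` and `β` are the two points where the straight line through `x` and `y`
meets the boundary of `Ω`, labeled so that `|α−x| < |α−y|` and `|β−y| < |β−x|`. -/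
def IsHilbertPair {n : ℕ} (Ω : Set (Euc n)) (x y α β : Euc n) : Prop :=
  α ∈ frontier Ω ∧ β ∈ frontier Ω ∧
    Collinear ℝ ({α, x, y} : Set (Euc n)) ∧ Collinear ℝ ({β, x, y} : Set (Euc n)) ∧
    dist α x < dist α y ∧ dist β y < dist β x

/-- The Hilbert metric of `Ω`: `d_Ω(x,y) = ln((|α−y|/|α−x|)·(|β−x|/|β−y|))` for `x ≠ y`
(where `α, β` are as in `IsHilbertPair`; for `x ≠ y` in a convex domain `Ω` such a pair
exists and is unique), and `d_Ω(x,x) = 0` (no such pair exists when `x = y`). -/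
def hilbertDist {n : ℕ} (Ω : Set (Euc n)) (x y : Euc n) : ℝ :=
  if h : ∃ p : Euc n × Euc n, IsHilbertPair Ω x y p.1 p.2 then
    Real.log ((dist h.choose.1 y / dist h.choose.1 x) * (dist h.choose.2 x / dist h.choose.2 y))
  else 0

/-- An isometry of Hilbert geometries: a surjective distance preserving map. -/
def IsHilbertIsometry {n : ℕ} (Ω Ω' : Set (Euc n)) (τ : Euc n → Euc n) : Prop :=
  Set.MapsTo τ Ω Ω' ∧ Set.SurjOn τ Ω Ω' ∧
    ∀ x ∈ Ω, ∀ y ∈ Ω, hilbertDist Ω' (τ x) (τ y) = hilbertDist Ω x y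

/-- The standard affine chart `ℝⁿ → ℝPⁿ`, `x ↦ [x : 1]`. -/
def chart {n : ℕ} (x : Euc n) : Projectivization ℝ (Fin (n + 1) → ℝ) :=
  Projectivization.mk ℝ ((Fin.snoc (fun i => x i) 1 : Fin (n + 1) → ℝ))
    (fun h => one_ne_zero (α := ℝ) (by simpa using congrFun h (Fin.last n)))

/-- The projective transformation of `ℝPⁿ` induced by an element of `GL_{n+1}(ℝ)`
(every element of `PGL_{n+1}(ℝ)` arises this way). -/
def projMap {n : ℕ} (g : (Fin (n + 1) → ℝ) ≃ₗ[ℝ] (Fin (n + 1) → ℝ)) :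
    Projectivization ℝ (Fin (n + 1) → ℝ) → Projectivization ℝ (Fin (n + 1) → ℝ) :=
  Projectivization.map (g : (Fin (n + 1) → ℝ) →ₗ[ℝ] (Fin (n + 1) → ℝ)) g.injective

/-- `τ` agrees on `Ω` with (the restriction of) a projective transformation of `ℝPⁿ`. -/
def IsProjectiveOn {n : ℕ} (Ω : Set (Euc n)) (τ : Euc n → Euc n) : Prop :=
  ∃ g : (Fin (n + 1) → ℝ) ≃ₗ[ℝ] (Fin (n + 1) → ℝ),
    ∀ x ∈ Ω, chart (τ x) = projMap g (chart x)

/-- A ray in `Ω`: the intersection with `Ω` of a Euclidean ray starting at a point of `Ω`. -/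
def IsRayIn {n : ℕ} (Ω r : Set (Euc n)) : Prop :=
  ∃ p ∈ Ω, ∃ d : Euc n, d ≠ 0 ∧ r = {x | ∃ t : ℝ, 0 ≤ t ∧ x = p + t • d} ∩ Ω

/-- A line in `Ω`: the nonempty intersection of a straight line with `Ω`. -/
def IsLineIn {n : ℕ} (Ω L : Set (Euc n)) : Prop :=
  L.Nonempty ∧ ∃ p d : Euc n, d ≠ 0 ∧ L = {x | ∃ t : ℝ, x = p + t • d} ∩ Ω

/-- `a` is an accumulation point of the set `s ⊆ Ω` on the boundary of `Ω`.
For a ray `r` in a convex domain `Ω` there is exactly one such point, denoted `a(r)`. -/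
def IsBdryLimit {n : ℕ} (Ω s : Set (Euc n)) (a : Euc n) : Prop :=
  a ∈ frontier Ω ∧ a ∈ closure s

/-- `e` is a focusing point of the isometry `τ : Ω → Ω'`: an extreme point of the closure
of `Ω` such that for any two rays `r₁, r₂` in `Ω` with `a(r₁) = a(r₂) = e` one has
`a(τ(r₁)) = a(τ(r₂))`. -/
def IsFocusingPoint {n : ℕ} (Ω Ω' : Set (Euc n)) (τ : Euc n → Euc n) (e : Euc n) : Prop :=
  e ∈ Set.extremePoints ℝ (closure Ω) ∧
    ∀ r₁ r₂ : Set (Euc n), IsRayIn Ω r₁ → IsRayIn Ω r₂ →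
      IsBdryLimit Ω r₁ e → IsBdryLimit Ω r₂ e →
      ∀ a₁ a₂ : Euc n, IsBdryLimit Ω' (τ '' r₁) a₁ → IsBdryLimit Ω' (τ '' r₂) a₂ → a₁ = a₂

/-- An extreme line in `Ω`: a line in `Ω` whose closure meets `∂Ω` in extreme points
of the closure of `Ω`. -/
def IsExtremeLine {n : ℕ} (Ω L : Set (Euc n)) : Prop :=
  IsLineIn Ω L ∧ ∀ x ∈ closure L ∩ frontier Ω, x ∈ Set.extremePoints ℝ (closure Ω)

/-- `s` is rigid in `Ω`: for any two points `a, b` of `s` the segment `[a,b]` is the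
unique geodesic from `a` to `b` in `(Ω, d_Ω)`, i.e. every point `z` with
`d(a,z) + d(z,b) = d(a,b)` lies on the segment `[a,b]`. -/
def IsRigidSet {n : ℕ} (Ω s : Set (Euc n)) : Prop :=
  ∀ a ∈ s, ∀ b ∈ s, ∀ z ∈ Ω,
    hilbertDist Ω a z + hilbertDist Ω z b = hilbertDist Ω a b → z ∈ segment ℝ a b

/-- A face of a closed convex set `C`: a convex subset `F ⊆ C` such that whenever an open
segment between two points of `C` meets `F`, the whole closed segment lies in `F`. -/
def IsFace {n : ℕ} (C F : Set (Euc n)) : Prop :=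
  Convex ℝ F ∧ IsExtreme ℝ C F

/-- A face of `C` which is neither empty nor all of `C`. -/
def IsProperFace {n : ℕ} (C F : Set (Euc n)) : Prop :=
  IsFace C F ∧ F.Nonempty ∧ F ≠ C

/-- `Ω` is a cone with vertex `v` and base `B`: `B` is an `(n−1)`-dimensional convex
domain lying in a hyperplane not containing `v`, and `Ω` is the union of the open
segments from `v` to the points of `B`. -/
def IsConeWith {n : ℕ} (Ω : Set (Euc n)) (v : Euc n) (B : Set (Euc n)) : Prop :=
  ∃ (f : Euc n →ₗ[ℝ] ℝ) (c : ℝ), f ≠ 0 ∧ (∀ b ∈ B, f b = c) ∧ f v ≠ c ∧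
    B.Nonempty ∧ Convex ℝ B ∧ Bornology.IsBounded B ∧
    B = intrinsicInterior ℝ B ∧
    (affineSpan ℝ B : Set (Euc n)) = {x | f x = c} ∧
    Ω = ⋃ b ∈ B, openSegment ℝ v b

/-- `Ω` is a cone. -/
def IsCone {n : ℕ} (Ω : Set (Euc n)) : Prop :=
  ∃ v B, IsConeWith Ω v B



open AffineMap (lineMap lineMap_apply_module lineMap_apply_zero lineMap_apply_one)
open Filter Topology

/-! ### Chords of a convex domain -/

/-- A convex domain: an open bounded convex set. -/
structure ConvexDomain {n : ℕ} (Ω : Set (Euc n)) : Prop where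
  isOpen : IsOpen Ω
  isBounded : Bornology.IsBounded Ω
  convex : Convex ℝ Ω

/-- `α` and `β` are the two ends on `∂Ω` of a line in `Ω`; the line is then the open segment
between `α` and `β`. -/
structure Chord {n : ℕ} (Ω : Set (Euc n)) (α β : Euc n) : Prop where
  left : α ∈ frontier Ω
  right : β ∈ frontier Ω
  sub : ∀ t : ℝ, 0 < t → t < 1 → lineMap α β t ∈ Ω

variable {n : ℕ} {Ω Ω' : Set (Euc n)} {α β x y z : Euc n} {τ : Euc n → Euc n}

lemma lineMap_comp (α β : Euc n) (a b u : ℝ) :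
    lineMap (lineMap α β a) (lineMap α β b) u = lineMap α β (a + u * (b - a)) := by
  simp only [lineMap_apply_module]; module

lemma lineMap_flip (α β : Euc n) (a : ℝ) : lineMap β α a = lineMap α β (1 - a) := by
  simp only [lineMap_apply_module]; module

lemma Chord.symm (h : Chord Ω α β) : Chord Ω β α :=
  ⟨h.right, h.left, fun t h0 h1 => by
    rw [lineMap_flip]; exact h.sub _ (by linarith) (by linarith)⟩

namespace ConvexDomain

lemma notMem_of_frontier (hΩ : ConvexDomain Ω) (h : α ∈ frontier Ω) : α ∉ Ω := by
  rw [hΩ.isOpen.frontier_eq] at h; exact h.2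

lemma mem_closure_of_frontier (_ : ConvexDomain Ω) (h : α ∈ frontier Ω) : α ∈ closure Ω :=
  frontier_subset_closure h

lemma lineMap_mem (hΩ : ConvexDomain Ω) (hx : x ∈ Ω) (hy : y ∈ closure Ω) {t : ℝ}
    (h0 : 0 ≤ t) (h1 : t < 1) : lineMap x y t ∈ Ω := by
  rcases h0.eq_or_lt with rfl | h0
  · simpa using hx
  · have := hΩ.convex.openSegment_interior_closure_subset_interior
      (by rwa [hΩ.isOpen.interior_eq]) hy (lineMap_mem_openSegment ℝ x y ⟨h0, h1⟩)
    rwa [hΩ.isOpen.interior_eq] at this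

lemma lineMap_mem_closure (hΩ : ConvexDomain Ω) (hx : x ∈ closure Ω) (hy : y ∈ closure Ω) {t : ℝ}
    (h0 : 0 ≤ t) (h1 : t ≤ 1) : lineMap x y t ∈ closure Ω :=
  hΩ.convex.closure.segment_subset hx hy (lineMap_mem_segment ℝ x y ⟨h0, h1⟩)

end ConvexDomain

lemma Chord.ne (hΩ : ConvexDomain Ω) (h : Chord Ω α β) : α ≠ β := by
  rintro rfl
  have := h.sub (1/2) (by norm_num) (by norm_num)
  rw [AffineMap.lineMap_same_apply] at this
  exact hΩ.notMem_of_frontier h.left this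

lemma Chord.inj (hΩ : ConvexDomain Ω) (h : Chord Ω α β) {a b : ℝ}
    (hab : lineMap α β a = lineMap α β b) : a = b :=
  AffineMap.lineMap_injective ℝ (h.ne hΩ) hab

lemma Chord.lt_one (hΩ : ConvexDomain Ω) (h : Chord Ω α β) {t : ℝ}
    (ht : lineMap α β t ∈ Ω) : t < 1 := by
  by_contra! h1
  have hm := h.sub (1/2) (by norm_num) (by norm_num)
  have : β ∈ Ω := by
    have := hΩ.convex.segment_subset hm ht
      (lineMap_mem_segment ℝ _ _ (t := (1/2) / (t - 1/2)) ⟨by apply div_nonneg <;> linarith,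
        by rw [div_le_one] <;> linarith⟩)
    rw [lineMap_comp, div_mul_cancel₀ _ (by linarith)] at this
    norm_num at this
    exact this
  exact hΩ.notMem_of_frontier h.right this

lemma Chord.mem_iff (hΩ : ConvexDomain Ω) (h : Chord Ω α β) {t : ℝ} :
    lineMap α β t ∈ Ω ↔ 0 < t ∧ t < 1 := by
  refine ⟨fun ht => ⟨?_, h.lt_one hΩ ht⟩, fun ht => h.sub t ht.1 ht.2⟩
  have := h.symm.lt_one hΩ (t := 1 - t) (by rw [lineMap_flip]; simpa using ht)
  linarith

lemma Chord.le_one_of_closure (hΩ : ConvexDomain Ω) (h : Chord Ω α β) {t : ℝ}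
    (ht : lineMap α β t ∈ closure Ω) : t ≤ 1 := by
  by_contra! h1
  have hm := h.sub (1/2) (by norm_num) (by norm_num)
  have := hΩ.lineMap_mem hm ht (t := (1/2) / (t - 1/2)) (by apply div_nonneg <;> linarith)
    (by rw [div_lt_one] <;> linarith)
  rw [lineMap_comp, div_mul_cancel₀ _ (by linarith)] at this
  norm_num at this
  exact hΩ.notMem_of_frontier h.right this

lemma Chord.eq_of_frontier (hΩ : ConvexDomain Ω) (h : Chord Ω α β) {t : ℝ}
    (ht : lineMap α β t ∈ frontier Ω) : t = 0 ∨ t = 1 := by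
  have h1 := h.le_one_of_closure hΩ (frontier_subset_closure ht)
  have h2 := h.symm.le_one_of_closure hΩ (t := 1 - t) (by
    rw [lineMap_flip]; simpa using frontier_subset_closure ht)
  have h3 := mt (h.mem_iff hΩ).2 (hΩ.notMem_of_frontier ht)
  by_contra! h4
  exact h3 ⟨lt_of_le_of_ne (by linarith) h4.1.symm, lt_of_le_of_ne h1 h4.2⟩

lemma ConvexDomain.exists_exit (hΩ : ConvexDomain Ω) (hx : x ∈ Ω) {v : Euc n} (hv : v ≠ 0) :
    ∃ T : ℝ, 0 < T ∧ x + T • v ∈ frontier Ω := by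
  set S : Set ℝ := {t | 0 ≤ t ∧ x + t • v ∈ Ω} with hS
  have hc : Continuous fun t : ℝ => x + t • v := by fun_prop
  have h0 : (0 : ℝ) ∈ S := ⟨le_rfl, by simpa using hx⟩
  have hb : BddAbove S := by
    obtain ⟨C, hC⟩ := hΩ.isBounded.subset_closedBall x
    refine ⟨C / ‖v‖, fun t ht => ?_⟩
    have := hC ht.2
    rw [Metric.mem_closedBall, dist_eq_norm, add_sub_cancel_left, norm_smul,
      Real.norm_of_nonneg ht.1] at this
    rwa [le_div_iff₀ (norm_pos_iff.2 hv)]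
  have hcl : sSup S ∈ closure S := csSup_mem_closure ⟨0, h0⟩ hb
  have hn : x + sSup S • v ∉ Ω := by
    intro hmem
    obtain ⟨ε, hε, hε'⟩ := Metric.isOpen_iff.1 (hΩ.isOpen.preimage hc) _ hmem
    have h1 : sSup S + ε / 2 ∈ S := by
      refine ⟨add_nonneg (le_csSup hb h0) (by positivity), hε' ?_⟩
      rw [Metric.mem_ball, Real.dist_eq, add_sub_cancel_left, abs_of_pos (by positivity)]
      linarith
    have := le_csSup hb h1
    linarith
  have hcl' : x + sSup S • v ∈ closure Ω :=
    closure_minimal (t := (fun t : ℝ => x + t • v) ⁻¹' closure Ω)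
      (fun t ht => subset_closure ht.2) (isClosed_closure.preimage hc) hcl
  refine ⟨sSup S, lt_of_le_of_ne (le_csSup hb h0) fun h => hn (by rw [← h]; simpa using hx), ?_⟩
  rw [hΩ.isOpen.frontier_eq]
  exact ⟨hcl', hn⟩

lemma ConvexDomain.chord_of_mem (hΩ : ConvexDomain Ω) (hα : α ∈ frontier Ω) (hβ : β ∈ frontier Ω)
    {a : ℝ} (h0 : 0 < a) (h1 : a < 1) (ha : lineMap α β a ∈ Ω) : Chord Ω α β := by
  refine ⟨hα, hβ, fun t t0 t1 => ?_⟩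
  rcases le_total a t with h | h
  · have := hΩ.lineMap_mem ha (frontier_subset_closure hβ) (t := (t - a) / (1 - a))
      (by apply div_nonneg <;> linarith) (by rw [div_lt_one] <;> linarith)
    have h2 := lineMap_comp α β a 1 ((t - a) / (1 - a))
    rw [div_mul_cancel₀ _ (by linarith), add_sub_cancel, lineMap_apply_one] at h2
    rwa [h2] at this
  · have := hΩ.lineMap_mem ha (frontier_subset_closure hα) (t := (a - t) / a)
      (by apply div_nonneg <;> linarith) (by rw [div_lt_one] <;> linarith)
    have h2 := lineMap_comp α β a 0 ((a - t) / a)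
    rw [lineMap_apply_zero, zero_sub, mul_neg, div_mul_cancel₀ _ (by linarith)] at h2
    rw [h2] at this
    convert this using 2; ring

/-- Through two distinct points of `Ω` there passes a chord. -/
lemma ConvexDomain.exists_chord (hΩ : ConvexDomain Ω) (hx : x ∈ Ω) (hy : y ∈ Ω) (hxy : x ≠ y) :
    ∃ α β, ∃ a b : ℝ, Chord Ω α β ∧ 0 < a ∧ a < b ∧ b < 1 ∧ x = lineMap α β a ∧ y = lineMap α β b := by
  obtain ⟨S, hS, hα⟩ := hΩ.exists_exit hx (v := x - y) (sub_ne_zero.2 hxy)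
  obtain ⟨T, hT, hβ⟩ := hΩ.exists_exit hx (v := y - x) (sub_ne_zero.2 hxy.symm)
  have hST : S + T ≠ 0 := by positivity
  have e1 : x = lineMap (x + S • (x - y)) (x + T • (y - x)) (S / (S + T)) := by
    simp only [lineMap_apply_module]
    match_scalars <;> field_simp <;> ring
  have e2 : y = lineMap (x + S • (x - y)) (x + T • (y - x)) ((S + 1) / (S + T)) := by
    simp only [lineMap_apply_module]
    match_scalars <;> field_simp <;> ring
  have hch := hΩ.chord_of_mem hα hβ (a := S / (S + T)) (by positivity)
    (by rw [div_lt_one] <;> linarith) (e1 ▸ hx)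
  exact ⟨_, _, _, _, hch, by positivity, by gcongr; linarith,
    ((hch.mem_iff hΩ).1 (e2 ▸ hy)).2, e1, e2⟩

/-- From a boundary point through a point of `Ω` there passes a chord. -/
lemma ConvexDomain.exists_chord_from (hΩ : ConvexDomain Ω) (hα : α ∈ frontier Ω) (hx : x ∈ Ω) :
    ∃ β, ∃ a : ℝ, Chord Ω α β ∧ 0 < a ∧ a < 1 ∧ x = lineMap α β a := by
  have hne : x - α ≠ 0 := sub_ne_zero.2 fun h => hΩ.notMem_of_frontier hα (h ▸ hx)
  obtain ⟨T, hT, hβ⟩ := hΩ.exists_exit hx hne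
  have e1 : x = lineMap α (x + T • (x - α)) (1 / (1 + T)) := by
    simp only [lineMap_apply_module]
    match_scalars <;> field_simp <;> ring
  have h0 : 0 < 1 / (1 + T) := by positivity
  have h1 : 1 / (1 + T) < 1 := by rw [div_lt_one] <;> linarith
  exact ⟨_, _, hΩ.chord_of_mem hα hβ h0 h1 (e1 ▸ hx), h0, h1, e1⟩

/-- A supporting hyperplane at a boundary point, as the zero set of an affine function. -/
lemma ConvexDomain.exists_support (hΩ : ConvexDomain Ω) (hα : α ∈ frontier Ω) :
    ∃ φ : Euc n →ᵃ[ℝ] ℝ, φ α = 0 ∧ (∀ x ∈ Ω, 0 < φ x) ∧ ∀ x ∈ closure Ω, 0 ≤ φ x := by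
  obtain ⟨f, hf⟩ := geometric_hahn_banach_open_point hΩ.convex hΩ.isOpen (hΩ.notMem_of_frontier hα)
  refine ⟨AffineMap.const ℝ (Euc n) (f α) - f.toLinearMap.toAffineMap, by simp,
    fun x hx => by simpa using hf x hx, fun x hx => ?_⟩
  have : x ∈ {x | f x ≤ f α} := closure_minimal (fun y hy => (hf y hy).le)
    (isClosed_le f.continuous continuous_const) hx
  simpa using this

lemma affine_lineMap (φ : Euc n →ᵃ[ℝ] ℝ) (a : ℝ) :
    φ (lineMap x y a) = (1 - a) * φ x + a * φ y := by
  rw [AffineMap.apply_lineMap, lineMap_apply_module]; simp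

/-! ### The Hilbert metric along a chord -/

lemma isHilbertPair_chord (h : Chord Ω α β) {a b : ℝ} (h0 : 0 < a) (hab : a < b)
    (h1 : b < 1) (hne : α ≠ β) :
    IsHilbertPair Ω (lineMap α β a) (lineMap α β b) α β := by
  have hd : 0 < dist α β := dist_pos.2 hne
  have key : ∀ c : ℝ, Collinear ℝ {lineMap α β c, lineMap α β a, lineMap α β b} := by
    intro c
    refine (collinear_iff_exists_forall_eq_smul_vadd _).2 ⟨α, β - α, ?_⟩
    have hc : ∀ r : ℝ, ∃ s : ℝ, lineMap α β r = s • (β - α) +ᵥ α := fun r =>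
      ⟨r, by simp [lineMap_apply_module]; module⟩
    simp only [mem_insert_iff, mem_singleton_iff, forall_eq_or_imp, forall_eq]
    exact ⟨hc _, hc _, hc _⟩
  refine ⟨h.left, h.right, by simpa using key 0, by simpa using key 1, ?_, ?_⟩
  · rw [dist_left_lineMap, dist_left_lineMap, Real.norm_of_nonneg h0.le,
      Real.norm_of_nonneg (h0.trans hab).le]
    gcongr
  · rw [dist_right_lineMap, dist_right_lineMap, Real.norm_of_nonneg (by linarith),
      Real.norm_of_nonneg (by linarith)]
    gcongr

lemma IsHilbertPair.eq (hΩ : ConvexDomain Ω) (h : Chord Ω α β) {a b : ℝ} (h0 : 0 < a)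
    (hab : a < b) (h1 : b < 1) {α' β' : Euc n}
    (hp : IsHilbertPair Ω (lineMap α β a) (lineMap α β b) α' β') : α' = α ∧ β' = β := by
  obtain ⟨hα, hβ, cα, cβ, dα, dβ⟩ := hp
  have hne := h.ne hΩ
  have hd : 0 < dist α β := dist_pos.2 hne
  have hxy : lineMap α β a ≠ lineMap α β b := fun e => hab.ne (h.inj hΩ e)
  have key : ∀ {e : Euc n}, e ∈ frontier Ω →
      Collinear ℝ {e, lineMap α β a, lineMap α β b} → e = α ∨ e = β := by
    intro e he hc
    have := hc.mem_affineSpan_of_mem_of_ne (p₁ := lineMap α β a) (p₂ := lineMap α β b) (p₃ := e)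
      (by simp) (by simp) (by simp) hxy
    obtain ⟨r, rfl⟩ := mem_affineSpan_pair_iff_exists_lineMap_eq.1 this
    rw [lineMap_comp] at he ⊢
    rcases h.eq_of_frontier hΩ he with hr | hr <;> rw [hr] <;> simp
  constructor
  · rcases key hα cα with rfl | rfl
    · rfl
    · rw [dist_right_lineMap, dist_right_lineMap, Real.norm_of_nonneg (by linarith),
        Real.norm_of_nonneg (by linarith)] at dα
      have := lt_of_mul_lt_mul_right dα hd.le
      linarith
  · rcases key hβ cβ with rfl | rfl
    · rw [dist_left_lineMap, dist_left_lineMap, Real.norm_of_nonneg (by linarith),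
        Real.norm_of_nonneg (by linarith)] at dβ
      have := lt_of_mul_lt_mul_right dβ hd.le
      linarith
    · rfl

lemma hilbertDist_chord (hΩ : ConvexDomain Ω) (h : Chord Ω α β) {a b : ℝ} (h0 : 0 < a)
    (hab : a < b) (h1 : b < 1) :
    hilbertDist Ω (lineMap α β a) (lineMap α β b)
      = Real.log ((1 - a) / (1 - b)) + Real.log (b / a) := by
  have hex : ∃ p : Euc n × Euc n, IsHilbertPair Ω (lineMap α β a) (lineMap α β b) p.1 p.2 :=
    ⟨(α, β), isHilbertPair_chord h h0 hab h1 (h.ne hΩ)⟩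
  obtain ⟨e1, e2⟩ := hex.choose_spec.eq hΩ h h0 hab h1
  have hd : dist α β ≠ 0 := (dist_pos.2 (h.ne hΩ)).ne'
  rw [hilbertDist, dif_pos hex, e1, e2, dist_left_lineMap, dist_left_lineMap, dist_right_lineMap,
    dist_right_lineMap, mul_div_mul_right _ _ hd, mul_div_mul_right _ _ hd,
    Real.norm_of_nonneg (by linarith), Real.norm_of_nonneg (by linarith),
    Real.norm_of_nonneg (by linarith), Real.norm_of_nonneg (by linarith), mul_comm,
    Real.log_mul (div_pos (by linarith) (by linarith)).ne' (div_pos (by linarith) h0).ne']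

lemma hilbertDist_self (x : Euc n) : hilbertDist Ω x x = 0 := by
  rw [hilbertDist, dif_neg]
  rintro ⟨p, -, -, -, -, h, -⟩
  exact lt_irrefl _ h

/-- The unit speed parametrization of the chord from `α` to `β` for the Hilbert metric. -/
def geo (α β : Euc n) (t : ℝ) : Euc n := lineMap α β (Real.sigmoid t)

lemma geo_flip (α β : Euc n) (t : ℝ) : geo β α t = geo α β (-t) := by
  rw [geo, geo, lineMap_flip, Real.sigmoid_neg]

lemma exists_geo {a : ℝ} (h0 : 0 < a) (h1 : a < 1) : ∃ t, lineMap α β a = geo α β t := by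
  obtain ⟨t, ht⟩ : a ∈ range Real.sigmoid := by rw [Real.range_sigmoid]; exact ⟨h0, h1⟩
  exact ⟨t, by rw [geo, ht]⟩

lemma Chord.geo_mem (h : Chord Ω α β) (t : ℝ) : geo α β t ∈ Ω :=
  h.sub _ (Real.sigmoid_pos t) (Real.sigmoid_lt_one t)

lemma Chord.dist_geo_lt (hΩ : ConvexDomain Ω) (h : Chord Ω α β) {s t : ℝ} (hst : s < t) :
    hilbertDist Ω (geo α β s) (geo α β t) = t - s := by
  have p := Real.sigmoid_pos
  rw [geo, geo, hilbertDist_chord hΩ h (p s) (Real.sigmoid_lt hst) (Real.sigmoid_lt_one t),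
    ← Real.sigmoid_neg, ← Real.sigmoid_neg, ← Real.sigmoid_mul_rexp_neg, ← Real.sigmoid_mul_rexp_neg,
    ← Real.log_mul (by have := p s; have := p t; positivity)
      (by have := p s; have := p t; positivity)]
  have : Real.sigmoid s * Real.exp (-s) / (Real.sigmoid t * Real.exp (-t))
      * (Real.sigmoid t / Real.sigmoid s) = Real.exp (t - s) := by
    rw [sub_eq_neg_add, Real.exp_add, Real.exp_neg t]
    have h1 := (p s).ne'
    have h2 := (p t).ne'
    field_simp
  rw [this, Real.log_exp]

lemma Chord.dist_geo (hΩ : ConvexDomain Ω) (h : Chord Ω α β) (s t : ℝ) :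
    hilbertDist Ω (geo α β s) (geo α β t) = |s - t| := by
  rcases lt_trichotomy s t with hst | rfl | hst
  · rw [h.dist_geo_lt hΩ hst, abs_sub_comm, abs_of_pos (by linarith)]
  · simp [hilbertDist_self]
  · have := h.symm.dist_geo_lt hΩ (neg_lt_neg hst)
    rw [geo_flip α β, geo_flip α β, neg_neg, neg_neg] at this
    rw [this, abs_of_pos (by linarith)]; ring

lemma ConvexDomain.exists_geo (hΩ : ConvexDomain Ω) (hx : x ∈ Ω) (hy : y ∈ Ω) (hxy : x ≠ y) :
    ∃ α β, ∃ s t : ℝ, Chord Ω α β ∧ s < t ∧ x = geo α β s ∧ y = geo α β t := by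
  obtain ⟨α, β, a, b, h, h0, hab, h1, rfl, rfl⟩ := hΩ.exists_chord hx hy hxy
  obtain ⟨s, hs⟩ := _root_.exists_geo (α := α) (β := β) h0 (hab.trans h1)
  obtain ⟨t, ht⟩ := _root_.exists_geo (α := α) (β := β) (h0.trans hab) h1
  refine ⟨α, β, s, t, h, ?_, hs, ht⟩
  have e1 := h.inj hΩ hs
  have e2 := h.inj hΩ ht
  rw [e1, e2, Real.sigmoid_lt_iff] at hab
  exact hab

lemma hilbertDist_comm (hΩ : ConvexDomain Ω) (hx : x ∈ Ω) (hy : y ∈ Ω) :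
    hilbertDist Ω x y = hilbertDist Ω y x := by
  by_cases hxy : x = y
  · rw [hxy]
  · obtain ⟨α, β, s, t, h, -, rfl, rfl⟩ := hΩ.exists_geo hx hy hxy
    rw [h.dist_geo hΩ, h.dist_geo hΩ, abs_sub_comm]

lemma tendsto_geo_atTop (α β : Euc n) : Tendsto (geo α β) atTop (𝓝 β) := by
  have h : Continuous fun a : ℝ => lineMap α β a := AffineMap.lineMap_continuous
  have h2 := (h.tendsto 1).comp Real.tendsto_sigmoid_atTop
  simp only [lineMap_apply_one] at h2
  exact h2

lemma tendsto_geo_atBot (α β : Euc n) : Tendsto (geo α β) atBot (𝓝 α) := by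
  have h : Continuous fun a : ℝ => lineMap α β a := AffineMap.lineMap_continuous
  have h2 := (h.tendsto 0).comp Real.tendsto_sigmoid_atBot
  simp only [lineMap_apply_zero] at h2
  exact h2

/-- A parametrized chord is determined by its values at two times. -/
lemma Chord.geo_unique (hΩ : ConvexDomain Ω) (h : Chord Ω α β) {α' β' : Euc n}
    (h' : Chord Ω α' β') {s t s' t' : ℝ} (hst : s < t) (hst' : s' < t')
    (e1 : geo α β s = geo α' β' s') (e2 : geo α β t = geo α' β' t') :
    α = α' ∧ β = β' ∧ s = s' ∧ t = t' := by
  have hσ := Real.sigmoid_lt hst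
  have hσ' := Real.sigmoid_lt hst'
  rw [geo, geo] at e1 e2
  have key : ∀ r : ℝ, ∃ u, lineMap α' β' r = lineMap α β u ∧
      u = Real.sigmoid s + (r - Real.sigmoid s') / (Real.sigmoid t' - Real.sigmoid s')
        * (Real.sigmoid t - Real.sigmoid s) := by
    intro r
    refine ⟨_, ?_, rfl⟩
    rw [← lineMap_comp, e1, e2, lineMap_comp, div_mul_cancel₀ _ (by linarith)]
    congr 1; ring
  obtain ⟨u, hu, hu'⟩ := key 0
  obtain ⟨v, hv, hv'⟩ := key 1
  have huv : u < v := by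
    rw [hu', hv']
    have : 0 < Real.sigmoid t' - Real.sigmoid s' := by linarith
    have : 0 < Real.sigmoid t - Real.sigmoid s := by linarith
    gcongr
    norm_num
  rw [lineMap_apply_zero] at hu
  rw [lineMap_apply_one] at hv
  have hu0 := h.eq_of_frontier hΩ (hu ▸ h'.left)
  have hv0 := h.eq_of_frontier hΩ (hv ▸ h'.right)
  obtain ⟨rfl, rfl⟩ : u = 0 ∧ v = 1 := by
    rcases hu0 with rfl | rfl <;> rcases hv0 with rfl | rfl <;> first | (exact ⟨rfl, rfl⟩) | linarith
  rw [lineMap_apply_zero] at hu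
  rw [lineMap_apply_one] at hv
  subst hu hv
  exact ⟨rfl, rfl, Real.sigmoid_injective (h.inj hΩ e1), Real.sigmoid_injective (h.inj hΩ e2)⟩

/-! ### Comparison of the Hilbert metric with affine functions -/

/-- Quotients of positive affine functions bound the Hilbert metric from below, and equality
holds exactly when these functions vanish at the corresponding ends of the chord. -/
lemma log_add_log_le (hΩ : ConvexDomain Ω) (h : Chord Ω α β) {a b : ℝ} (h0 : 0 < a)
    (hab : a < b) (h1 : b < 1) {φ ψ : Euc n →ᵃ[ℝ] ℝ}
    (hφ : ∀ x ∈ Ω, 0 < φ x) (hφ' : ∀ x ∈ closure Ω, 0 ≤ φ x)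
    (hψ : ∀ x ∈ Ω, 0 < ψ x) (hψ' : ∀ x ∈ closure Ω, 0 ≤ ψ x) :
    Real.log (φ (lineMap α β a) / φ (lineMap α β b))
      + Real.log (ψ (lineMap α β b) / ψ (lineMap α β a))
        ≤ hilbertDist Ω (lineMap α β a) (lineMap α β b) ∧
    (Real.log (φ (lineMap α β a) / φ (lineMap α β b))
      + Real.log (ψ (lineMap α β b) / ψ (lineMap α β a))
        = hilbertDist Ω (lineMap α β a) (lineMap α β b) ↔ φ β = 0 ∧ ψ α = 0) := by
  have ha := h.sub a h0 (by linarith)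
  have hb := h.sub b (by linarith) h1
  have pa := hφ _ ha
  have pb := hφ _ hb
  have qa := hψ _ ha
  have qb := hψ _ hb
  have nβ := hφ' _ (frontier_subset_closure h.right)
  have nα := hψ' _ (frontier_subset_closure h.left)
  have a1 : 0 < 1 - a := by linarith
  have b1 : 0 < 1 - b := by linarith
  have b0 : 0 < b := by linarith
  have ba : 0 < b - a := by linarith
  have i1 : (1 - a) * φ (lineMap α β b) - (1 - b) * φ (lineMap α β a) = (b - a) * φ β := by
    rw [affine_lineMap, affine_lineMap]; ring
  have i2 : b * ψ (lineMap α β a) - a * ψ (lineMap α β b) = (b - a) * ψ α := by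
    rw [affine_lineMap, affine_lineMap]; ring
  have j1 : 0 ≤ (b - a) * φ β := by positivity
  have j2 : 0 ≤ (b - a) * ψ α := by positivity
  have l1 : Real.log (φ (lineMap α β a) / φ (lineMap α β b)) ≤ Real.log ((1 - a) / (1 - b)) := by
    apply Real.log_le_log (by positivity)
    rw [div_le_div_iff₀ pb b1]; linarith
  have l2 : Real.log (ψ (lineMap α β b) / ψ (lineMap α β a)) ≤ Real.log (b / a) := by
    apply Real.log_le_log (by positivity)
    rw [div_le_div_iff₀ qa h0]; linarith
  rw [hilbertDist_chord hΩ h h0 hab h1]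
  refine ⟨add_le_add l1 l2, fun e => ?_, fun e => ?_⟩
  · have e1 := Real.log_injOn_pos (by simp only [mem_Ioi]; positivity)
      (by simp only [mem_Ioi]; positivity) (le_antisymm l1 (by linarith))
    have e2 := Real.log_injOn_pos (by simp only [mem_Ioi]; positivity)
      (by simp only [mem_Ioi]; positivity) (le_antisymm l2 (by linarith))
    rw [div_eq_div_iff pb.ne' b1.ne'] at e1
    rw [div_eq_div_iff qa.ne' h0.ne'] at e2
    have k1 : (b - a) * φ β = 0 := by linarith
    have k2 : (b - a) * ψ α = 0 := by linarith
    exact ⟨(mul_eq_zero.1 k1).resolve_left ba.ne', (mul_eq_zero.1 k2).resolve_left ba.ne'⟩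
  · rw [e.1, mul_zero] at i1
    rw [e.2, mul_zero] at i2
    have e1 : φ (lineMap α β a) / φ (lineMap α β b) = (1 - a) / (1 - b) := by
      rw [div_eq_div_iff pb.ne' b1.ne']; linarith
    have e2 : ψ (lineMap α β b) / ψ (lineMap α β a) = b / a := by
      rw [div_eq_div_iff qa.ne' h0.ne']; linarith
    rw [e1, e2]

/-- Geodesics are unique along a chord with an extreme end: a point between two points of the
chord (in the sense of the Hilbert metric) lies on the chord. If `z` were off the line, the rays
from `x` through `z` and from `z` through `y` would meet a supporting hyperplane at `β` in two
boundary points having `β` strictly between them. -/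
lemma rigid_right (hΩ : ConvexDomain Ω) (h : Chord Ω α β) (hβ : β ∈ extremePoints ℝ (closure Ω))
    {a b : ℝ} (h0 : 0 < a) (hab : a < b) (h1 : b < 1) (hz : z ∈ Ω)
    (hd : hilbertDist Ω (lineMap α β a) z + hilbertDist Ω z (lineMap α β b)
      = hilbertDist Ω (lineMap α β a) (lineMap α β b)) :
    ∃ c : ℝ, z = lineMap α β c := by
  by_cases hxz : lineMap α β a = z
  · exact ⟨a, hxz.symm⟩
  by_cases hzy : z = lineMap α β b
  · exact ⟨b, hzy⟩
  obtain ⟨φ, φ0, φp, φn⟩ := hΩ.exists_support h.right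
  obtain ⟨ψ, ψ0, ψp, ψn⟩ := hΩ.exists_support h.left
  have hx := h.sub a h0 (by linarith)
  have hy := h.sub b (by linarith) h1
  have e := ((log_add_log_le hΩ h h0 hab h1 φp φn ψp ψn).2).2 ⟨φ0, ψ0⟩
  obtain ⟨α₁, β₁, a₁, b₁, k₁, a₁0, ab₁, b₁1, ex, ez⟩ := hΩ.exists_chord hx hz hxz
  obtain ⟨α₂, β₂, a₂, b₂, k₂, a₂0, ab₂, b₂1, ez', ey⟩ := hΩ.exists_chord hz hy hzy
  have m₁ := log_add_log_le hΩ k₁ a₁0 ab₁ b₁1 φp φn ψp ψn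
  have m₂ := log_add_log_le hΩ k₂ a₂0 ab₂ b₂1 φp φn ψp ψn
  rw [← ex, ← ez] at m₁
  rw [← ez', ← ey] at m₂
  have px := φp _ hx
  have py := φp _ hy
  have pz := φp _ hz
  have qx := ψp _ hx
  have qy := ψp _ hy
  have qz := ψp _ hz
  rw [Real.log_div px.ne' pz.ne', Real.log_div qz.ne' qx.ne'] at m₁
  rw [Real.log_div pz.ne' py.ne', Real.log_div qy.ne' qz.ne'] at m₂
  rw [Real.log_div px.ne' py.ne', Real.log_div qy.ne' qx.ne'] at e
  have f₁ := (m₁.2.1 (by linarith [m₁.1, m₂.1])).1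
  have f₂ := (m₂.2.1 (by linarith [m₁.1, m₂.1])).1
  set X := lineMap α β a
  set Y := lineMap α β b
  -- express `z` and `y` as convex combinations ending at `β₁`, `β₂`, and `β` through `x`, `y`
  obtain ⟨θ₁, t₁, t₁', z₁⟩ : ∃ θ : ℝ, 0 < θ ∧ θ < 1 ∧ z = (1 - θ) • X + θ • β₁ := by
    refine ⟨(b₁ - a₁) / (1 - a₁), div_pos (by linarith) (by linarith),
      by rw [div_lt_one] <;> linarith, ?_⟩
    have : 1 - a₁ ≠ 0 := by linarith
    rw [ez, ex]; simp only [lineMap_apply_module]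
    match_scalars <;> field_simp <;> ring
  obtain ⟨θ₂, t₂, t₂', y₂⟩ : ∃ θ : ℝ, 0 < θ ∧ θ < 1 ∧ Y = (1 - θ) • z + θ • β₂ := by
    refine ⟨(b₂ - a₂) / (1 - a₂), div_pos (by linarith) (by linarith),
      by rw [div_lt_one] <;> linarith, ?_⟩
    have : 1 - a₂ ≠ 0 := by linarith
    rw [ey, ez']; simp only [lineMap_apply_module]
    match_scalars <;> field_simp <;> ring
  obtain ⟨θ, t0, t1, y₃⟩ : ∃ θ : ℝ, 0 < θ ∧ θ < 1 ∧ Y = (1 - θ) • X + θ • β := by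
    refine ⟨(b - a) / (1 - a), div_pos (by linarith) (by linarith),
      by rw [div_lt_one] <;> linarith, ?_⟩
    have : 1 - a ≠ 0 := by linarith
    simp only [X, Y, lineMap_apply_module]
    match_scalars <;> field_simp <;> ring
  have g : ∀ (θ : ℝ) (p q : Euc n), φ ((1 - θ) • p + θ • q) = (1 - θ) * φ p + θ * φ q := by
    intro θ p q; rw [← affine_lineMap, lineMap_apply_module]
  have g₁ : φ z = (1 - θ₁) * φ X := by rw [z₁, g, f₁]; ring
  have g₂ : φ Y = (1 - θ₂) * φ z := by rw [y₂, g, f₂]; ring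
  have g₃ : φ Y = (1 - θ) * φ X := by rw [y₃, g, φ0]; ring
  have hθ : 1 - θ = (1 - θ₂) * (1 - θ₁) := by
    have : (1 - θ) * φ X = ((1 - θ₂) * (1 - θ₁)) * φ X := by rw [← g₃, g₂, g₁]; ring
    exact mul_right_cancel₀ px.ne' this
  have hcomb : θ • β = ((1 - θ₂) * θ₁) • β₁ + θ₂ • β₂ := by
    have : (1 - θ) • X + θ • β = (1 - θ₂) • ((1 - θ₁) • X + θ₁ • β₁) + θ₂ • β₂ := by
      rw [← y₃, ← z₁, ← y₂]
    rw [hθ] at this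
    have h2 : θ • β = (1 - θ₂) • ((1 - θ₁) • X + θ₁ • β₁) + θ₂ • β₂
        - ((1 - θ₂) * (1 - θ₁)) • X := by rw [← this]; abel
    rw [h2]; module
  have hβ₁ : β₁ = β := by
    refine (mem_extremePoints_iff_left.1 hβ).2 _ (frontier_subset_closure k₁.right) _
      (frontier_subset_closure k₂.right) ⟨(1 - θ₂) * θ₁ / θ, θ₂ / θ, ?_, ?_, ?_, ?_⟩
    · have : 0 < 1 - θ₂ := by linarith
      positivity
    · positivity
    · rw [← add_div, div_eq_one_iff_eq t0.ne']; nlinarith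
    · have : β = θ⁻¹ • (θ • β) := by rw [smul_smul, inv_mul_cancel₀ t0.ne', one_smul]
      rw [this, hcomb]; simp only [div_eq_inv_mul]; module
  refine ⟨a + θ₁ * (1 - a), ?_⟩
  rw [z₁, hβ₁]; simp only [X, lineMap_apply_module]; module

/-- If moving from `x` to `y`, and back, uses only the fractions `θ` and `θ'` of segments that stay
in the closure, then the Hilbert distance is bounded in terms of `θ` and `θ'`. -/
lemma hilbertDist_le (hΩ : ConvexDomain Ω) (hx : x ∈ Ω) (hy : y ∈ Ω) {c c' : Euc n} {θ θ' : ℝ}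
    (hc : c ∈ closure Ω) (hc' : c' ∈ closure Ω) (h0 : 0 ≤ θ) (h1 : θ < 1) (h0' : 0 ≤ θ')
    (h1' : θ' < 1) (e : y = lineMap x c θ) (e' : x = lineMap y c' θ') :
    hilbertDist Ω x y ≤ -Real.log (1 - θ) + -Real.log (1 - θ') := by
  by_cases hxy : x = y
  · rw [hxy, hilbertDist_self]
    have := Real.log_nonpos (x := 1 - θ) (by linarith) (by linarith)
    have := Real.log_nonpos (x := 1 - θ') (by linarith) (by linarith)
    linarith
  obtain ⟨α, β, a, b, h, a0, hab, b1, ex, ey⟩ := hΩ.exists_chord hx hy hxy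
  obtain ⟨φ, φ0, φp, φn⟩ := hΩ.exists_support h.right
  obtain ⟨ψ, ψ0, ψp, ψn⟩ := hΩ.exists_support h.left
  have k := ((log_add_log_le hΩ h a0 hab b1 φp φn ψp ψn).2).2 ⟨φ0, ψ0⟩
  rw [← ex, ← ey] at k
  rw [← k]
  have px := φp _ hx
  have py := φp _ hy
  have qx := ψp _ hx
  have qy := ψp _ hy
  have i1 : (1 - θ) * φ x ≤ φ y := by
    have : φ y = φ (lineMap x c θ) := by rw [← e]
    rw [this, affine_lineMap]
    have := mul_nonneg h0 (φn _ hc)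
    linarith
  have i2 : (1 - θ') * ψ y ≤ ψ x := by
    have : ψ x = ψ (lineMap y c' θ') := by rw [← e']
    rw [this, affine_lineMap]
    have := mul_nonneg h0' (ψn _ hc')
    linarith
  rw [← Real.log_inv, ← Real.log_inv]
  have t1 : 0 < 1 - θ := by linarith
  have t2 : 0 < 1 - θ' := by linarith
  apply add_le_add
  · apply Real.log_le_log (by positivity)
    rw [div_le_iff₀ py, inv_mul_eq_div, le_div_iff₀ t1]; linarith
  · apply Real.log_le_log (by positivity)
    rw [div_le_iff₀ qx, inv_mul_eq_div, le_div_iff₀ t2]; linarith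

/-- Conversely, if the Hilbert distance is at most `R`, then the segment from `x` to `y` can be
prolonged inside the closure by a factor depending only on `R`. -/
lemma exists_lineMap_of_hilbertDist_le (hΩ : ConvexDomain Ω) (hx : x ∈ Ω) (hy : y ∈ Ω) {R : ℝ}
    (hR : 0 < R) (hd : hilbertDist Ω x y ≤ R) :
    ∃ c ∈ closure Ω, y = lineMap x c (1 - Real.exp (-R)) := by
  by_cases hxy : x = y
  · exact ⟨x, subset_closure hx, by rw [AffineMap.lineMap_same_apply, hxy]⟩
  obtain ⟨α, β, a, b, h, a0, hab, b1, ex, ey⟩ := hΩ.exists_chord hx hy hxy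
  rw [ex, ey, hilbertDist_chord hΩ h a0 hab b1] at hd
  have pa : 0 < 1 - a := by linarith
  have pb : 0 < 1 - b := by linarith
  have l : 0 ≤ Real.log (b / a) := Real.log_nonneg (by rw [le_div_iff₀ a0]; linarith)
  have hE : Real.exp (-R) ≤ (1 - b) / (1 - a) := by
    rw [← Real.le_log_iff_exp_le (by positivity), ← inv_div, Real.log_inv]
    linarith
  have hΘ : 0 < 1 - Real.exp (-R) := by
    have := Real.exp_lt_one_iff.2 (show -R < 0 by linarith)
    linarith
  have hθ : (b - a) / (1 - a) ≤ 1 - Real.exp (-R) := by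
    have : (b - a) / (1 - a) = 1 - (1 - b) / (1 - a) := by field_simp; ring
    linarith
  have hθ0 : 0 ≤ (b - a) / (1 - a) := div_nonneg (by linarith) pa.le
  refine ⟨lineMap x β ((b - a) / (1 - a) / (1 - Real.exp (-R))),
    hΩ.lineMap_mem_closure (subset_closure hx) (frontier_subset_closure h.right)
      (div_nonneg hθ0 hΘ.le) (by rwa [div_le_one hΘ]), ?_⟩
  rw [ex, ey]; simp only [lineMap_apply_module]
  generalize 1 - Real.exp (-R) = Θ at hΘ
  match_scalars <;> field_simp <;> ring

/-! ### Continuity of isometries -/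

/-- Convergence in the Hilbert metric implies Euclidean convergence. -/
lemma tendsto_of_hilbertDist (hΩ : ConvexDomain Ω) {ι : Type*} {l : Filter ι} {u : ι → Euc n}
    (hu : ∀ i, u i ∈ Ω) (hx : x ∈ Ω)
    (h : ∀ ε > 0, ∀ᶠ i in l, hilbertDist Ω (u i) x ≤ ε) : Tendsto u l (𝓝 x) := by
  rw [Metric.tendsto_nhds]
  intro ε hε
  obtain ⟨D, hD0, hD⟩ : ∃ D > 0, ∀ p ∈ closure Ω, ∀ q ∈ closure Ω, dist p q ≤ D := by
    obtain ⟨D, hD⟩ := Metric.isBounded_iff.1 hΩ.isBounded.closure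
    exact ⟨max D 1, by positivity, fun p hp q hq => (hD hp hq).trans (le_max_left _ _)⟩
  have hR : 0 < ε / (2 * D) := by positivity
  filter_upwards [h _ hR] with i hi
  obtain ⟨c, hc, e⟩ := exists_lineMap_of_hilbertDist_le hΩ (hu i) hx hR hi
  have h1 : Real.exp (-(ε / (2 * D))) ≤ 1 := Real.exp_le_one_iff.2 (by linarith)
  have h2 := Real.add_one_le_exp (-(ε / (2 * D)))
  rw [e, dist_left_lineMap, Real.norm_of_nonneg (by linarith)]
  calc _ ≤ (ε / (2 * D)) * D := by
        gcongr
        · linarith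
        · exact hD _ (subset_closure (hu i)) _ hc
    _ = ε / 2 := by field_simp
    _ < ε := by linarith

/-- Euclidean convergence inside `Ω` implies convergence in the Hilbert metric. -/
lemma hilbertDist_of_tendsto (hΩ : ConvexDomain Ω) {ι : Type*} {l : Filter ι} {u : ι → Euc n}
    (hu : ∀ i, u i ∈ Ω) (hx : x ∈ Ω) (h : Tendsto u l (𝓝 x)) {ε : ℝ} (hε : 0 < ε) :
    ∀ᶠ i in l, hilbertDist Ω (u i) x ≤ ε := by
  set θ := 1 - Real.exp (-(ε / 2)) with hθ
  have h1 : Real.exp (-(ε / 2)) < 1 := Real.exp_lt_one_iff.2 (by linarith)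
  have h0 := Real.exp_pos (-(ε / 2))
  have hθ0 : 0 < θ := by linarith
  have c1 : Tendsto (fun i => lineMap (u i) x (1 / θ)) l (𝓝 x) := by
    have : Tendsto (fun i => (1 - 1 / θ) • u i + (1 / θ) • x) l
      (𝓝 ((1 - 1 / θ) • x + (1 / θ) • x)) := (h.const_smul _).add tendsto_const_nhds
    simpa only [lineMap_apply_module, ← add_smul, sub_add_cancel, one_smul] using this
  have c2 : Tendsto (fun i => lineMap x (u i) (1 / θ)) l (𝓝 x) := by
    have : Tendsto (fun i => (1 - 1 / θ) • x + (1 / θ) • u i) l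
      (𝓝 ((1 - 1 / θ) • x + (1 / θ) • x)) := tendsto_const_nhds.add (h.const_smul _)
    simpa only [lineMap_apply_module, ← add_smul, sub_add_cancel, one_smul] using this
  filter_upwards [c1 (hΩ.isOpen.mem_nhds hx), c2 (hΩ.isOpen.mem_nhds hx)] with i i1 i2
  have := hilbertDist_le hΩ (hu i) hx (subset_closure i1) (subset_closure i2) (θ := θ) (θ' := θ)
    hθ0.le (by linarith) hθ0.le (by linarith)
    (by simp only [lineMap_apply_module]; match_scalars <;> field_simp <;> ring)
    (by simp only [lineMap_apply_module]; match_scalars <;> field_simp <;> ring)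
  have e : 1 - θ = Real.exp (-(ε / 2)) := by rw [hθ]; ring
  rw [e, Real.log_exp] at this
  linarith

lemma IsHilbertIsometry.tendsto (hτ : IsHilbertIsometry Ω Ω' τ) (hΩ : ConvexDomain Ω)
    (hΩ' : ConvexDomain Ω') {ι : Type*} {l : Filter ι} {u : ι → Euc n}
    (hu : ∀ i, u i ∈ Ω) (hx : x ∈ Ω) (h : Tendsto u l (𝓝 x)) :
    Tendsto (fun i => τ (u i)) l (𝓝 (τ x)) := by
  refine tendsto_of_hilbertDist hΩ' (fun i => hτ.1 (hu i)) (hτ.1 hx) fun ε hε => ?_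
  filter_upwards [hilbertDist_of_tendsto hΩ hu hx h hε] with i hi
  rwa [hτ.2.2 _ (hu i) _ hx]

/-! ### Isometries map chords with an extreme end to chords -/

/-- On a chord with an extreme end, a point is determined by its distances to two points of the
chord between which it lies metrically. -/
lemma rigid (hΩ : ConvexDomain Ω) (h : Chord Ω α β)
    (he : α ∈ extremePoints ℝ (closure Ω) ∨ β ∈ extremePoints ℝ (closure Ω))
    {s t u : ℝ} (hst : s < t) (hsu : s ≤ u) (hz : z ∈ Ω)
    (h1 : hilbertDist Ω (geo α β s) z = u - s) (h2 : hilbertDist Ω z (geo α β t) = t - u) :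
    z = geo α β u := by
  have key : ∃ c : ℝ, z = lineMap α β c := by
    rcases he with he | he
    · have hs := hilbertDist_comm hΩ (h.geo_mem s) hz
      have ht := hilbertDist_comm hΩ hz (h.geo_mem t)
      have hst' := h.symm.dist_geo_lt hΩ (neg_lt_neg hst)
      rw [h1] at hs
      rw [h2] at ht
      rw [← neg_neg s, ← geo_flip α β] at hs
      rw [← neg_neg t, ← geo_flip α β] at ht
      obtain ⟨c, hc⟩ := rigid_right hΩ h.symm he (Real.sigmoid_pos (-t))
        (Real.sigmoid_lt (neg_lt_neg hst)) (Real.sigmoid_lt_one (-s)) hz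
        (by
          change hilbertDist Ω (geo β α (-t)) z + hilbertDist Ω z (geo β α (-s))
            = hilbertDist Ω (geo β α (-t)) (geo β α (-s))
          linarith)
      exact ⟨1 - c, by rw [hc, lineMap_flip]⟩
    · refine rigid_right hΩ h he (Real.sigmoid_pos s) (Real.sigmoid_lt hst)
        (Real.sigmoid_lt_one t) hz ?_
      change hilbertDist Ω (geo α β s) z + hilbertDist Ω z (geo α β t)
        = hilbertDist Ω (geo α β s) (geo α β t)
      rw [h1, h2, h.dist_geo_lt hΩ hst]; ring
  obtain ⟨c, rfl⟩ := key
  obtain ⟨c0, c1⟩ := (h.mem_iff hΩ).1 hz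
  obtain ⟨r, hr⟩ := exists_geo (α := α) (β := β) c0 c1
  rw [hr] at h1 h2 ⊢
  rw [h.dist_geo hΩ] at h1 h2
  congr 1
  rcases abs_cases (s - r) with ⟨h3, h4⟩ | ⟨h3, h4⟩ <;>
    rcases abs_cases (r - t) with ⟨h5, h6⟩ | ⟨h5, h6⟩ <;> linarith

/-- An isometry maps a chord with an extreme end onto a chord, preserving the unit speed
parametrization up to a translation of the parameter. Indeed, the image of such a chord consists
of unique geodesics, and straight segments are geodesics in `Ω'`. -/
theorem IsHilbertIsometry.exists_chord (hτ : IsHilbertIsometry Ω Ω' τ) (hΩ : ConvexDomain Ω)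
    (hΩ' : ConvexDomain Ω') (h : Chord Ω α β)
    (he : α ∈ extremePoints ℝ (closure Ω) ∨ β ∈ extremePoints ℝ (closure Ω)) :
    ∃ α' β' c, Chord Ω' α' β' ∧ ∀ t, τ (geo α β t) = geo α' β' (t + c) := by
  obtain ⟨hmaps, hsurj, hiso⟩ := hτ
  have hd : ∀ s t, s < t → hilbertDist Ω' (τ (geo α β s)) (τ (geo α β t)) = t - s :=
    fun s t hst => by rw [hiso _ (h.geo_mem s) _ (h.geo_mem t), h.dist_geo_lt hΩ hst]
  -- on each compact interval the image is a piece of a chord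
  have loc : ∀ s t, s < t → ∃ α' β' c, Chord Ω' α' β' ∧
      ∀ u, s ≤ u → u ≤ t → τ (geo α β u) = geo α' β' (u + c) := by
    intro s t hst
    have hne : τ (geo α β s) ≠ τ (geo α β t) := by
      intro e
      have := hd s t hst
      rw [e, hilbertDist_self] at this
      linarith
    obtain ⟨α', β', s', t', h', hst', e1, e2⟩ :=
      hΩ'.exists_geo (hmaps (h.geo_mem s)) (hmaps (h.geo_mem t)) hne
    have hlen : t' - s' = t - s := by rw [← hd s t hst, e1, e2, h'.dist_geo_lt hΩ' hst']
    refine ⟨α', β', s' - s, h', fun u hsu hut => ?_⟩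
    obtain ⟨w, hw, ew⟩ := hsurj (h'.geo_mem (u + (s' - s)))
    have : w = geo α β u := by
      refine rigid hΩ h he hst hsu hw ?_ ?_
      · rw [← hiso _ (h.geo_mem s) _ hw, ew, e1, h'.dist_geo hΩ', abs_sub_comm,
          abs_of_nonneg (by linarith)]
        ring
      · rw [← hiso _ hw _ (h.geo_mem t), ew, e2, h'.dist_geo hΩ', abs_sub_comm,
          abs_of_nonneg (by linarith)]
        linarith
    rw [← this, ew]
  obtain ⟨α', β', c, h', hc⟩ := loc 0 1 one_pos
  refine ⟨α', β', c, h', fun t => ?_⟩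
  obtain ⟨α'', β'', c', h'', hc'⟩ := loc (min t 0) (max t 1)
    (lt_of_le_of_lt (min_le_right _ _) (lt_of_lt_of_le one_pos (le_max_right _ _)))
  have m0 := min_le_right t 0
  have m1 := le_max_right t 1
  have e0 := hc' 0 m0 (by linarith)
  have e1 := hc' 1 (by linarith) m1
  rw [hc 0 le_rfl one_pos.le] at e0
  rw [hc 1 one_pos.le le_rfl] at e1
  obtain ⟨rfl, rfl, e, -⟩ := h'.geo_unique hΩ' h'' (by linarith) (by linarith) e0 e1
  rw [hc' t (min_le_left _ _) (le_max_left _ _)]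
  congr 1; linarith

/-! ### Images of chords that share an extreme end -/

/-- A chord is determined by one end and one point. -/
lemma Chord.eq_of_meet (hΩ : ConvexDomain Ω) {γ : Euc n} (h : Chord Ω α γ) (h' : Chord Ω β γ)
    {s t : ℝ} (e : geo α γ s = geo β γ t) : α = β := by
  have hs := Real.sigmoid_lt_one s
  have ht := Real.sigmoid_lt_one t
  rw [geo, geo] at e
  generalize Real.sigmoid s = a at hs e
  generalize Real.sigmoid t = b at ht e
  have hb : 1 - b ≠ 0 := by linarith
  have eβ : β = lineMap γ α ((1 - a) / (1 - b)) := by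
    have h1 : β = lineMap γ (lineMap β γ b) (1 / (1 - b)) := by
      simp only [lineMap_apply_module]
      match_scalars
      · field_simp
      · field_simp; ring
    rw [h1, ← e]
    simp only [lineMap_apply_module]
    match_scalars
    · field_simp; ring
    · field_simp
  rcases h.symm.eq_of_frontier hΩ (eβ ▸ h'.left) with h0 | h0
  · have : 0 < (1 - a) / (1 - b) := div_pos (by linarith) (by linarith)
    linarith
  · rw [h0, lineMap_apply_one] at eβ
    exact eβ.symm

lemma dist_geo_add_dist_geo (α β : Euc n) {s t u : ℝ} (hst : s ≤ t) (htu : t ≤ u) :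
    dist (geo α β s) (geo α β t) + dist (geo α β t) (geo α β u)
      = dist (geo α β s) (geo α β u) := by
  have h1 := Real.sigmoid_le hst
  have h2 := Real.sigmoid_le htu
  simp only [geo, dist_lineMap_lineMap, Real.dist_eq]
  rw [abs_sub_comm, abs_of_nonneg (by linarith), abs_sub_comm, abs_of_nonneg (by linarith),
    abs_sub_comm, abs_of_nonneg (by linarith)]
  ring

lemma geo_lt_of_lineMap_lt {a b s t : ℝ} (hne : α ≠ β) (hab : a < b)
    (ha : lineMap α β a = geo α β s) (hb : lineMap α β b = geo α β t) : s < t := by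
  have e1 := AffineMap.lineMap_injective ℝ hne ha
  have e2 := AffineMap.lineMap_injective ℝ hne hb
  rw [e1, e2] at hab
  exact Real.sigmoid_strictMono.lt_iff_lt.1 hab

/-- Three points in this order on a chord with an extreme initial end are mapped to three points
in this order on a straight line. -/
lemma IsHilbertIsometry.dist_add (hτ : IsHilbertIsometry Ω Ω' τ) (hΩ : ConvexDomain Ω)
    (hΩ' : ConvexDomain Ω') (hf : α ∈ frontier Ω) (he : α ∈ extremePoints ℝ (closure Ω))
    (hx : x ∈ Ω) {a b : ℝ} (h0 : 0 < a) (hab : a < b) (h1 : b < 1) :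
    dist (τ (lineMap α x a)) (τ (lineMap α x b)) + dist (τ (lineMap α x b)) (τ x)
      = dist (τ (lineMap α x a)) (τ x) := by
  obtain ⟨β, r, h, r0, r1, rfl⟩ := hΩ.exists_chord_from hf hx
  have key : ∀ u : ℝ, lineMap α (lineMap α β r) u = lineMap α β (u * r) := fun u => by
    simp only [lineMap_apply_module]; module
  rw [key, key]
  have i1 : a * r < b * r := by nlinarith
  have i2 : b * r < r := by nlinarith
  have i0 : 0 < a * r := by positivity
  obtain ⟨s, hs⟩ := exists_geo (α := α) (β := β) i0 (i1.trans (i2.trans r1))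
  obtain ⟨t, ht⟩ := exists_geo (α := α) (β := β) (i0.trans i1) (i2.trans r1)
  obtain ⟨u, hu⟩ := exists_geo (α := α) (β := β) r0 r1
  have j1 := geo_lt_of_lineMap_lt (h.ne hΩ) i1 hs ht
  have j2 := geo_lt_of_lineMap_lt (h.ne hΩ) i2 ht hu
  obtain ⟨α', β', c, h', hc⟩ := hτ.exists_chord hΩ hΩ' h (Or.inl he)
  rw [hs, ht, hu, hc, hc, hc]
  exact dist_geo_add_dist_geo _ _ (by linarith) (by linarith)

/-- The end `p` of a chord `(q, p)` with `q` extreme is focusing: the image of any chord ending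
at `p` that is again a chord ends at the same point as the image of `(q, p)`. The reason is that
the chord from `q` to a point `x` of the second chord converges to `(q, p)` as `x` tends to `p`,
and its image is straight. -/
lemma IsHilbertIsometry.focus (hτ : IsHilbertIsometry Ω Ω' τ) (hΩ : ConvexDomain Ω)
    (hΩ' : ConvexDomain Ω') {q p s q' p' s' p₁ : Euc n} {c c₁ : ℝ}
    (hq : q ∈ extremePoints ℝ (closure Ω)) (h : Chord Ω q p) (h' : Chord Ω' q' p')
    (hc : ∀ t, τ (geo q p t) = geo q' p' (t + c)) (hs : Chord Ω s p) (hs' : Chord Ω' s' p₁)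
    (hc₁ : ∀ t, τ (geo s p t) = geo s' p₁ (t + c₁)) : p₁ = p' := by
  have lim : ∀ a : ℝ, 0 < a → a < 1 → Tendsto (fun t => τ (lineMap q (geo s p t) a)) atTop
      (𝓝 (τ (lineMap q p a))) := by
    intro a a0 a1
    refine hτ.tendsto hΩ hΩ' (fun t => ?_) (h.sub a a0 a1) ?_
    · rw [lineMap_flip]
      exact hΩ.lineMap_mem (hs.geo_mem t) (frontier_subset_closure h.left) (by linarith)
        (by linarith)
    · simp only [lineMap_apply_module]
      exact tendsto_const_nhds.add ((tendsto_geo_atTop s p).const_smul a)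
  have limx : Tendsto (fun t => τ (geo s p t)) atTop (𝓝 p₁) := by
    simp only [hc₁]
    exact (tendsto_geo_atTop s' p₁).comp (tendsto_atTop_add_const_right _ _ tendsto_id)
  have l1 := lim (1 / 4) (by norm_num) (by norm_num)
  have l2 := lim (1 / 2) (by norm_num) (by norm_num)
  have key : dist (τ (lineMap q p (1 / 4 : ℝ))) (τ (lineMap q p (1 / 2 : ℝ)))
      + dist (τ (lineMap q p (1 / 2 : ℝ))) p₁ = dist (τ (lineMap q p (1 / 4 : ℝ))) p₁ := by
    refine tendsto_nhds_unique ((l1.dist l2).add (l2.dist limx)) ?_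
    refine (l1.dist limx).congr fun t => ?_
    exact (hτ.dist_add hΩ hΩ' h.left hq (hs.geo_mem t) (by norm_num) (by norm_num)
      (by norm_num)).symm
  obtain ⟨a, ha⟩ := exists_geo (α := q) (β := p) (a := 1 / 4) (by norm_num) (by norm_num)
  obtain ⟨b, hb⟩ := exists_geo (α := q) (β := p) (a := 1 / 2) (by norm_num) (by norm_num)
  have hab := geo_lt_of_lineMap_lt (h.ne hΩ) (by norm_num) ha hb
  rw [ha, hb, hc, hc, dist_add_dist_eq_iff] at key
  obtain ⟨v, ⟨v0, v1⟩, hv⟩ := key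
  have hσ := Real.sigmoid_lt (add_lt_add_left hab c)
  have hσ0 := Real.sigmoid_pos (a + c)
  have hv0 : v ≠ 0 := by
    rintro rfl
    rw [lineMap_apply_zero] at hv
    exact hσ.ne (h'.inj hΩ' hv)
  have vpos : 0 < v := lt_of_le_of_ne v0 hv0.symm
  have e : p₁ = lineMap (geo q' p' (a + c)) (geo q' p' (b + c)) (1 / v) := by
    rw [← hv]
    simp only [lineMap_apply_module]
    match_scalars
    · field_simp
    · field_simp; ring
  rw [geo, geo, lineMap_comp] at e
  have vinv : 0 < 1 / v := by positivity
  rcases h'.eq_of_frontier hΩ' (e ▸ hs'.right) with h0 | h0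
  · have := mul_pos vinv (sub_pos.2 hσ)
    linarith
  · rw [h0, lineMap_apply_one] at e
    exact e

/-! ### The ends of the image of an extreme line are extreme -/

/-- If chords `(q, p)` and `(s, p)` stay at bounded distance near `q` and `s`, and `q` is extreme,
then `s = q`. -/
lemma eq_of_bounded (hΩ : ConvexDomain Ω) {q p s : Euc n} (hq : q ∈ extremePoints ℝ (closure Ω))
    (h : Chord Ω q p) (hs : Chord Ω s p) {c c₁ R : ℝ} (hR : 0 < R)
    (hd : ∀ t, hilbertDist Ω (geo s p (t + c₁)) (geo q p (t + c)) ≤ R) : s = q := by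
  have hΘ1 : Real.exp (-R) < 1 := Real.exp_lt_one_iff.2 (by linarith)
  have hE := Real.exp_pos (-R)
  have hex := fun t => exists_lineMap_of_hilbertDist_le hΩ (hs.geo_mem _) (h.geo_mem _) hR (hd t)
  have hΘ0 : 0 < 1 - Real.exp (-R) := by linarith
  have hΘ2 : 1 - Real.exp (-R) < 1 := by linarith
  generalize 1 - Real.exp (-R) = Θ at hex hΘ0 hΘ2
  choose w hw ew using hex
  have ew' : ∀ t, w t = lineMap (geo s p (t + c₁)) (geo q p (t + c)) (1 / Θ) := fun t => by
    rw [ew t]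
    simp only [lineMap_apply_module]
    match_scalars
    · field_simp
    · field_simp; ring
  have lim : Tendsto w atBot (𝓝 (lineMap s q (1 / Θ))) := by
    rw [funext ew']
    simp only [lineMap_apply_module]
    exact (((tendsto_geo_atBot s p).comp (tendsto_atBot_add_const_right _ _ tendsto_id)).const_smul
      _).add (((tendsto_geo_atBot q p).comp
        (tendsto_atBot_add_const_right _ _ tendsto_id)).const_smul _)
  have hcl : lineMap s q (1 / Θ) ∈ closure Ω :=
    isClosed_closure.mem_of_tendsto lim (Eventually.of_forall hw)
  have hseg : q ∈ openSegment ℝ s (lineMap s q (1 / Θ)) := by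
    have := lineMap_mem_openSegment ℝ s (lineMap s q (1 / Θ)) (t := Θ) ⟨hΘ0, hΘ2⟩
    convert this using 1
    simp only [lineMap_apply_module]
    match_scalars
    · field_simp
    · field_simp; ring
  exact (mem_extremePoints.1 hq).2 _ (frontier_subset_closure hs.left) _ hcl hseg |>.1

/-- Two chords with a common end whose other ends lie inside a common segment `[u, v]` of the
closure stay at bounded distance. -/
lemma hilbertDist_geo_le (hΩ : ConvexDomain Ω) {u v p : Euc n} (hu : u ∈ closure Ω)
    (hv : v ∈ closure Ω) {e η : ℝ} (he0 : 0 < e) (hη : 0 < η) (he1 : e + η < 1)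
    (h : Chord Ω (lineMap u v e) p) (h' : Chord Ω (lineMap u v (e + η)) p) (t : ℝ) :
    hilbertDist Ω (geo (lineMap u v (e + η)) p t) (geo (lineMap u v e) p t)
      ≤ -Real.log (1 - η / (e + η)) + -Real.log (1 - η / (1 - e)) := by
  have s0 := Real.sigmoid_pos t
  have s1 := Real.sigmoid_lt_one t
  have d1 : e + η ≠ 0 := by linarith
  have d2 : 1 - e ≠ 0 := by linarith
  refine hilbertDist_le hΩ (h'.geo_mem t) (h.geo_mem t)
    (hΩ.lineMap_mem_closure hu (frontier_subset_closure h.right) s0.le s1.le)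
    (hΩ.lineMap_mem_closure hv (frontier_subset_closure h.right) s0.le s1.le)
    (by positivity) ?_ (div_nonneg hη.le (by linarith)) ?_ ?_ ?_
  · rw [div_lt_one (by linarith)]; linarith
  · rw [div_lt_one (by linarith)]; linarith
  · simp only [geo, lineMap_apply_module]
    match_scalars <;> field_simp <;> ring
  · simp only [geo, lineMap_apply_module]
    match_scalars <;> field_simp <;> ring

/-- The initial end `q'` of the image of a chord with both ends extreme is extreme. If `q'` were
interior to a segment in the boundary, some other chord ending at `p'` would stay at bounded
distance from `(q', p')`; by focusing it is the image of a chord ending at `p`, which would stay at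
bounded distance from `(q, p)`, and this contradicts the extremality of `q`. -/
theorem IsHilbertIsometry.extreme (hτ : IsHilbertIsometry Ω Ω' τ) (hΩ : ConvexDomain Ω)
    (hΩ' : ConvexDomain Ω') {q p q' p' : Euc n} {c : ℝ}
    (hq : q ∈ extremePoints ℝ (closure Ω)) (hp : p ∈ extremePoints ℝ (closure Ω))
    (h : Chord Ω q p) (h' : Chord Ω' q' p')
    (hc : ∀ t, τ (geo q p t) = geo q' p' (t + c)) : q' ∈ extremePoints ℝ (closure Ω') := by
  refine mem_extremePoints_iff_left.2 ⟨frontier_subset_closure h'.left, ?_⟩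
  intro u hu v hv huv
  by_contra hne
  rw [openSegment_eq_image_lineMap] at huv
  obtain ⟨e, ⟨e0, e1⟩, rfl⟩ := huv
  have huv : u ≠ v := by
    rintro rfl
    exact hne (by rw [AffineMap.lineMap_same_apply])
  -- a second chord ending at `p'`, whose initial end is slightly moved inside the segment `[u, v]`
  obtain ⟨η, hη, hη1, hm⟩ : ∃ η : ℝ, 0 < η ∧ e + η < 1 ∧
      lineMap (lineMap u v (e + η)) p' (1 / 2 : ℝ) ∈ Ω' := by
    have hcont : Tendsto (fun η : ℝ => lineMap (lineMap u v (e + η)) p' (1 / 2 : ℝ)) (𝓝[>] 0)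
        (𝓝 (lineMap (lineMap u v e) p' (1 / 2 : ℝ))) := by
      have : Continuous (fun η : ℝ => lineMap (lineMap u v (e + η)) p' (1 / 2 : ℝ)) := by
        simp only [lineMap_apply_module]
        fun_prop
      have := this.tendsto 0
      rw [add_zero] at this
      exact this.mono_left nhdsWithin_le_nhds
    have h1 := hcont.eventually_mem (hΩ'.isOpen.mem_nhds (h'.sub (1 / 2) (by norm_num) (by norm_num)))
    have h2 : ∀ᶠ η : ℝ in 𝓝[>] 0, η ∈ Ioo 0 (1 - e) := Ioo_mem_nhdsGT (by linarith)
    obtain ⟨η, h3, h4⟩ := (h1.and h2).exists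
    exact ⟨η, h4.1, by linarith [h4.2], h3⟩
  have hfr : lineMap u v (e + η) ∈ frontier Ω' := by
    obtain ⟨φ, φ0, φp, φn⟩ := hΩ'.exists_support h'.left
    rw [hΩ'.isOpen.frontier_eq]
    refine ⟨hΩ'.lineMap_mem_closure hu hv (by linarith) hη1.le, fun hmem => ?_⟩
    have h1 := φp _ hmem
    rw [affine_lineMap] at h1 φ0
    have h2 := φn _ hu
    have h3 := φn _ hv
    have h4 : 0 < 1 - e := by linarith
    have h5 : φ v = 0 := by nlinarith [mul_nonneg h4.le h2]
    have h6 : φ u = 0 := by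
      rw [h5] at φ0
      nlinarith
    rw [h5, h6] at h1
    linarith
  have hch : Chord Ω' (lineMap u v (e + η)) p' :=
    hΩ'.chord_of_mem hfr h'.right (by norm_num) (by norm_num) hm
  obtain ⟨t', ht'⟩ := exists_geo (α := lineMap u v (e + η)) (β := p') (a := 1 / 2)
    (by norm_num) (by norm_num)
  obtain ⟨m, hmΩ, hmτ⟩ := hτ.2.1 hm
  -- the chord through the preimage of its midpoint that ends at `p` is mapped onto it
  obtain ⟨s, a, hs, a0, a1, hma⟩ := hΩ.exists_chord_from h.right hmΩ
  have hs := hs.symm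
  rw [lineMap_flip] at hma
  obtain ⟨t, ht⟩ := exists_geo (α := s) (β := p) (a := 1 - a) (by linarith) (by linarith)
  obtain ⟨s', p₁, c₁, hs', hc₁⟩ := hτ.exists_chord hΩ hΩ' hs (Or.inr hp)
  obtain rfl := hτ.focus hΩ hΩ' hq h h' hc hs hs' hc₁
  have hmeet : geo s' p₁ (t + c₁) = geo (lineMap u v (e + η)) p₁ t' := by
    rw [← ht', ← hmτ, hma, ht, hc₁]
  obtain rfl := hs'.eq_of_meet hΩ' hch hmeet
  have hbd : ∀ r, hilbertDist Ω (geo s p (r + -c₁)) (geo q p (r + -c))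
      ≤ max 1 (-Real.log (1 - η / (e + η)) + -Real.log (1 - η / (1 - e))) := fun r => by
    rw [← hτ.2.2 _ (hs.geo_mem _) _ (h.geo_mem _), hc, hc₁, neg_add_cancel_right,
      neg_add_cancel_right]
    exact (hilbertDist_geo_le hΩ' hu hv e0 hη hη1 h' hch r).trans (le_max_right _ _)
  obtain rfl := eq_of_bounded hΩ hq h hs (lt_of_lt_of_le one_pos (le_max_left _ _)) hbd
  -- so both chords in `Ω'` are the image of the same chord
  have hE := (hc t).symm.trans (hc₁ t)
  have := AffineMap.lineMap_injective ℝ huv (h'.eq_of_meet hΩ' hch hE)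
  linarith

/-! ### Lines as chords -/

/-- A line in a convex domain is the open segment between the ends of a chord. -/
lemma IsLineIn.exists_chord (hΩ : ConvexDomain Ω) {L : Set (Euc n)} (hL : IsLineIn Ω L) :
    ∃ α β, Chord Ω α β ∧ L = range (geo α β) := by
  obtain ⟨⟨x, hx⟩, p, d, hd, rfl⟩ := hL
  obtain ⟨⟨r, rfl⟩, hxΩ⟩ := hx
  obtain ⟨S, hS, hα⟩ := hΩ.exists_exit hxΩ (neg_ne_zero.2 hd)
  obtain ⟨T, hT, hβ⟩ := hΩ.exists_exit hxΩ hd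
  have hST : S + T ≠ 0 := by positivity
  have e : ∀ k : ℝ, lineMap (p + r • d + S • -d) (p + r • d + T • d) k
      = p + (r - S + k * (S + T)) • d := fun k => by
    simp only [lineMap_apply_module]; module
  have h : Chord Ω (p + r • d + S • -d) (p + r • d + T • d) := by
    refine hΩ.chord_of_mem hα hβ (a := S / (S + T)) (by positivity)
      (by rw [div_lt_one] <;> linarith) ?_
    rw [e, div_mul_cancel₀ _ hST, sub_add_cancel]
    exact hxΩ
  refine ⟨_, _, h, Subset.antisymm ?_ ?_⟩
  · rintro _ ⟨⟨k, rfl⟩, hk⟩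
    have ek : p + k • d = lineMap (p + r • d + S • -d) (p + r • d + T • d)
        ((k - r + S) / (S + T)) := by
      rw [e, div_mul_cancel₀ _ hST]; congr 2; ring
    rw [ek] at hk ⊢
    obtain ⟨k0, k1⟩ := (h.mem_iff hΩ).1 hk
    obtain ⟨t, ht⟩ := exists_geo k0 k1
    exact ⟨t, ht.symm⟩
  · rintro _ ⟨t, rfl⟩
    exact ⟨⟨_, e _⟩, h.geo_mem t⟩

lemma Chord.isLineIn (hΩ : ConvexDomain Ω) (h : Chord Ω α β) : IsLineIn Ω (range (geo α β)) := by
  refine ⟨range_nonempty _, α, β - α, sub_ne_zero.2 (h.ne hΩ).symm, Subset.antisymm ?_ ?_⟩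
  · rintro _ ⟨t, rfl⟩
    exact ⟨⟨Real.sigmoid t, by rw [geo, lineMap_apply_module]; module⟩, h.geo_mem t⟩
  · rintro _ ⟨⟨k, rfl⟩, hk⟩
    have ek : α + k • (β - α) = lineMap α β k := by rw [lineMap_apply_module]; module
    rw [ek] at hk ⊢
    obtain ⟨k0, k1⟩ := (h.mem_iff hΩ).1 hk
    obtain ⟨t, ht⟩ := exists_geo (α := α) (β := β) k0 k1
    exact ⟨t, ht.symm⟩

/-- The closure of the line carried by a chord meets the boundary exactly in the two ends. -/
lemma Chord.closure_inter_frontier (hΩ : ConvexDomain Ω) (h : Chord Ω α β) :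
    closure (range (geo α β)) ∩ frontier Ω = {α, β} := by
  refine Subset.antisymm ?_ ?_
  · rintro x ⟨hx, hf⟩
    have hcl : IsClosed (lineMap α β '' Icc (0 : ℝ) 1) :=
      (isCompact_Icc.image AffineMap.lineMap_continuous).isClosed
    have hsub : range (geo α β) ⊆ lineMap α β '' Icc (0 : ℝ) 1 := by
      rintro _ ⟨t, rfl⟩
      exact ⟨_, ⟨(Real.sigmoid_pos t).le, (Real.sigmoid_lt_one t).le⟩, rfl⟩
    obtain ⟨r, -, rfl⟩ := closure_minimal hsub hcl hx
    rcases h.eq_of_frontier hΩ hf with rfl | rfl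
    · left; exact lineMap_apply_zero _ _
    · right; exact lineMap_apply_one _ _
  · rintro x (rfl | rfl)
    · exact ⟨mem_closure_of_tendsto (tendsto_geo_atBot x β)
        (Eventually.of_forall fun t => mem_range_self t), h.left⟩
    · exact ⟨mem_closure_of_tendsto (tendsto_geo_atTop α x)
        (Eventually.of_forall fun t => mem_range_self t), h.right⟩

/-- If `τ : Ω → Ω'` is an isometry of Hilbert geometries and `L` is an
extreme line in `Ω`, then `τ(L)` is an extreme line in `Ω'`. -/
theorem stmt_18 {n : ℕ} (Ω Ω' : Set (Euc n))
    (hne : Ω.Nonempty) (hop : IsOpen Ω) (hbd : Bornology.IsBounded Ω) (hcv : Convex ℝ Ω)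
    (hne' : Ω'.Nonempty) (hop' : IsOpen Ω') (hbd' : Bornology.IsBounded Ω')
    (hcv' : Convex ℝ Ω') (τ : Euc n → Euc n) (hτ : IsHilbertIsometry Ω Ω' τ)
    (L : Set (Euc n)) (hL : IsExtremeLine Ω L) :
    IsExtremeLine Ω' (τ '' L) := by
  have hΩ : ConvexDomain Ω := ⟨hop, hbd, hcv⟩
  have hΩ' : ConvexDomain Ω' := ⟨hop', hbd', hcv'⟩
  obtain ⟨hline, hext⟩ := hL
  obtain ⟨α, β, h, rfl⟩ := hline.exists_chord hΩ
  rw [h.closure_inter_frontier hΩ] at hext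
  have hα := hext α (by simp)
  have hβ := hext β (by simp)
  obtain ⟨α', β', c, h', hc⟩ := hτ.exists_chord hΩ hΩ' h (Or.inl hα)
  have himage : τ '' range (geo α β) = range (geo α' β') := by
    rw [← range_comp]
    ext x
    constructor
    · rintro ⟨t, rfl⟩
      exact ⟨t + c, (hc t).symm⟩
    · rintro ⟨t, rfl⟩
      exact ⟨t - c, by rw [Function.comp_apply, hc, sub_add_cancel]⟩
  rw [himage]
  refine ⟨h'.isLineIn hΩ', ?_⟩
  rw [h'.closure_inter_frontier hΩ']
  rintro x (rfl | rfl)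
  · exact hτ.extreme hΩ hΩ' hα hβ h h' hc
  · refine hτ.extreme hΩ hΩ' hβ hα h.symm h'.symm (c := -c) fun t => ?_
    rw [geo_flip α β, geo_flip α', hc]
    congr 1
    ring
end
end

section
/- Let Ω be a 3-dimensional open bounded convex set in ℝ³ which does not contain an extreme line. Then either Ω is a cone, or Ω is the interior of the convex hull of a closed line segment [f₁,f₂] and a closed convex quadrilateral Q (the convex hull of four points in a plane, no three collinear), where f₁ and f₂ do not lie in the plane containing Q. -/
/-!
Let `K` be the closure of `Ω` and `E` the set of its extreme points. If two points of `E` had their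
midpoint in `Ω`, the line through them would be an extreme line; hence any two points of `E` lie in
a common supporting plane of `K` (`exists_common_support`). Call the trace of a supporting plane on
`E` a block.

In an affine dependence between points of `E` there are at least two positive and two negative
weights, since an extreme point is not a convex combination of other points of `K`. Moreover, a
supporting plane containing the points of positive weight contains the whole support of the
dependence. Applied to the dependences between five points of space and between four points of a
plane, this gives (`blockSystem`):

* a block is determined by three of its points;
* among five points of `E`, four lie in a common block (one sign class has exactly two members,
  and some supporting plane contains these two);
* four points of a block split into two pairs such that every block containing the first pair
  contains the second (the diagonals of a convex quadrilateral).

The rest is combinatorics (`incidence_core`). Let `B` be a block with four points, and suppose that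
at least two points of `E` lie outside `B`. Any two outside points `x, y` induce a perfect matching
on each four points of `B`, two points being matched if they share a block with `x` and `y`. Thus
`B` has no fifth point. With three outside points, their three pairs would induce three different
pairings of the four points of `B`, none of them the pairing by diagonals, although there are only
three pairings altogether. Hence `E` consists of `B` and two further points, and the Krein–Milman
theorem gives the second alternative.

Otherwise all points of `E` except one lie in a plane, which is trivially so if `E` has at most four
points, and `Ω` is a cone over its face in that plane (`isCone_of_plane`).
-/

open Set
open scoped LinearAlgebra.Projectivization
open scoped Classical

noncomputable section

/-! ### Combinatorics of block systems -/

/-- Some member of `𝓑` contains `x, y, p, q`; then `p` and `q` are said to be joined by `x, y`. -/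
def CoBlock {α : Type*} (𝓑 : Set (Set α)) (x y p q : α) : Prop :=
  ∃ B ∈ 𝓑, x ∈ B ∧ y ∈ B ∧ p ∈ B ∧ q ∈ B

lemma CoBlock.symm {α : Type*} {𝓑 : Set (Set α)} {x y p q : α} (h : CoBlock 𝓑 x y p q) :
    CoBlock 𝓑 x y q p := by
  obtain ⟨B, h1, h2, h3, h4, h5⟩ := h
  exact ⟨B, h1, h2, h3, h5, h4⟩

/-- An abstract incidence structure on `E` whose blocks, the members of `𝓑`, are
subsets of `E`: a block is determined by any three of its points,
any five points have four in a common block, and any four points of a block can be split into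
two pairs such that every block through the first pair contains the second (as for the
diagonals of a convex quadrilateral and the supporting planes of a convex body). -/
structure BlockSystem {α : Type*} (E : Set α) (𝓑 : Set (Set α)) : Prop where
  h3 : ∀ B ∈ 𝓑, ∀ B' ∈ 𝓑, ∀ a b c : α, a ≠ b → a ≠ c → b ≠ c →
      a ∈ B → b ∈ B → c ∈ B → a ∈ B' → b ∈ B' → c ∈ B' → B ⊆ B'
  h5 : ∀ a ∈ E, ∀ b ∈ E, ∀ c ∈ E, ∀ d ∈ E, ∀ e ∈ E, [a, b, c, d, e].Nodup →
      ∃ B ∈ 𝓑, (a ∈ B ∧ b ∈ B ∧ c ∈ B ∧ d ∈ B) ∨ (a ∈ B ∧ b ∈ B ∧ c ∈ B ∧ e ∈ B) ∨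
        (a ∈ B ∧ b ∈ B ∧ d ∈ B ∧ e ∈ B) ∨ (a ∈ B ∧ c ∈ B ∧ d ∈ B ∧ e ∈ B) ∨
        (b ∈ B ∧ c ∈ B ∧ d ∈ B ∧ e ∈ B)
  hE : ∀ B ∈ 𝓑, B ⊆ E
  hX : ∀ B ∈ 𝓑, ∀ a ∈ B, ∀ b ∈ B, ∀ c ∈ B, ∀ d ∈ B, [a, b, c, d].Nodup →
      (∀ B' ∈ 𝓑, a ∈ B' → b ∈ B' → c ∈ B' ∧ d ∈ B') ∨
      (∀ B' ∈ 𝓑, a ∈ B' → c ∈ B' → b ∈ B' ∧ d ∈ B') ∨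
      (∀ B' ∈ 𝓑, a ∈ B' → d ∈ B' → b ∈ B' ∧ c ∈ B')

section Combinatorics

variable {α : Type*} {E : Set α} {𝓑 : Set (Set α)}

/-- For `x, y` outside a block `B`, being joined by `x, y` is a partial matching on `B`. -/
lemma coBlock_matching
    (S : BlockSystem E 𝓑)
    {B : Set α} (hB : B ∈ 𝓑) {x y p q s : α} (hxy : x ≠ y) (hx : x ∉ B) (hy : y ∉ B)
    (hp : p ∈ B) (hq : q ∈ B) (hs : s ∈ B) (hpq : p ≠ q) (hps : p ≠ s) (hqs : q ≠ s)
    (h1 : CoBlock 𝓑 x y p q) (h2 : CoBlock 𝓑 x y p s) : False := by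
  obtain ⟨B1, hB1, x1, y1, p1, q1⟩ := h1
  obtain ⟨B2, hB2, x2, y2, p2, s2⟩ := h2
  have hxp : x ≠ p := fun h => hx (h ▸ hp)
  have hyp : y ≠ p := fun h => hy (h ▸ hp)
  have h12 := S.h3 B1 hB1 B2 hB2 x y p hxy hxp hyp x1 y1 p1 x2 y2 p2
  exact hx (S.h3 B2 hB2 B hB p q s hpq hps hqs p2 (h12 q1) s2 hp hq hs x2)

/-- Among three points of a block `B`, two are joined by given points `x, y` outside `B`. -/
lemma coBlock_triple
    (S : BlockSystem E 𝓑)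
    {B : Set α} (hB : B ∈ 𝓑) {x y a b c : α} (hxE : x ∈ E) (hyE : y ∈ E) (hxy : x ≠ y)
    (hx : x ∉ B) (hy : y ∉ B) (ha : a ∈ B) (hb : b ∈ B) (hc : c ∈ B)
    (hab : a ≠ b) (hac : a ≠ c) (hbc : b ≠ c) :
    CoBlock 𝓑 x y a b ∨ CoBlock 𝓑 x y a c ∨ CoBlock 𝓑 x y b c := by
  have hne : ∀ z ∉ B, ∀ p ∈ B, p ≠ z := fun z hz p hp h => hz (h ▸ hp)
  obtain ⟨B', hB', h⟩ := S.h5 a (S.hE B hB ha) b (S.hE B hB hb) c (S.hE B hB hc) x hxE y hyE (by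
    simp [hab, hac, hbc, hxy, hne x hx a ha, hne x hx b hb, hne x hx c hc, hne y hy a ha,
      hne y hy b hb, hne y hy c hc])
  have key : a ∈ B' → b ∈ B' → c ∈ B' → B' ⊆ B := fun h1 h2 h4 =>
    S.h3 B' hB' B hB a b c hab hac hbc h1 h2 h4 ha hb hc
  rcases h with ⟨h1, h2, h4, h6⟩ | ⟨h1, h2, h4, h6⟩ | ⟨h1, h2, h4, h6⟩ | ⟨h1, h2, h4, h6⟩ |
    ⟨h1, h2, h4, h6⟩
  · exact absurd (key h1 h2 h4 h6) hx
  · exact absurd (key h1 h2 h4 h6) hy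
  · exact Or.inl ⟨B', hB', h4, h6, h1, h2⟩
  · exact Or.inr (Or.inl ⟨B', hB', h4, h6, h1, h2⟩)
  · exact Or.inr (Or.inr ⟨B', hB', h4, h6, h1, h2⟩)

/-- The matching induced on four points of a block by two points outside is perfect. -/
lemma coBlock_quad
    (S : BlockSystem E 𝓑)
    {B : Set α} (hB : B ∈ 𝓑) {x y a b c d : α} (hxE : x ∈ E) (hyE : y ∈ E) (hxy : x ≠ y)
    (hx : x ∉ B) (hy : y ∉ B) (ha : a ∈ B) (hb : b ∈ B) (hc : c ∈ B) (hd : d ∈ B)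
    (hab : a ≠ b) (hac : a ≠ c) (had : a ≠ d) (hbc : b ≠ c) (hbd : b ≠ d) (hcd : c ≠ d) :
    (CoBlock 𝓑 x y a b ∧ CoBlock 𝓑 x y c d) ∨ (CoBlock 𝓑 x y a c ∧ CoBlock 𝓑 x y b d) ∨
      (CoBlock 𝓑 x y a d ∧ CoBlock 𝓑 x y b c) := by
  have tr := fun {p q s : α} (hp : p ∈ B) (hq : q ∈ B) (hs : s ∈ B) (h1 : p ≠ q) (h2 : p ≠ s)
    (h4 : q ≠ s) => coBlock_triple S hB hxE hyE hxy hx hy hp hq hs h1 h2 h4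
  have mt := fun {p q s : α} (hp : p ∈ B) (hq : q ∈ B) (hs : s ∈ B) (h1 : p ≠ q) (h2 : p ≠ s)
    (h4 : q ≠ s) (j : CoBlock 𝓑 x y p q) => coBlock_matching S hB hxy hx hy hp hq hs h1 h2 h4 j
  rcases tr ha hb hc hab hac hbc with h | h | h
  · rcases tr ha hc hd hac had hcd with g | g | g
    · exact (mt ha hb hc hab hac hbc h g).elim
    · exact (mt ha hb hd hab had hbd h g).elim
    · exact Or.inl ⟨h, g⟩
  · rcases tr ha hb hd hab had hbd with g | g | g
    · exact (mt ha hb hc hab hac hbc g h).elim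
    · exact (mt ha hc hd hac had hcd h g).elim
    · exact Or.inr (Or.inl ⟨h, g⟩)
  · rcases tr ha hb hd hab had hbd with g | g | g
    · exact (mt hb ha hc hab.symm hbc hac g.symm h).elim
    · exact Or.inr (Or.inr ⟨g, h⟩)
    · exact (mt hb hc hd hbc hbd hcd h g).elim

/-- A block with five points misses at most one point of `E`. -/
lemma no_five
    (S : BlockSystem E 𝓑)
    {B : Set α} (hB : B ∈ 𝓑) {x y a b c d e : α} (hxE : x ∈ E) (hyE : y ∈ E) (hxy : x ≠ y)
    (hx : x ∉ B) (hy : y ∉ B) (ha : a ∈ B) (hb : b ∈ B) (hc : c ∈ B) (hd : d ∈ B) (he : e ∈ B)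
    (hnd : [a, b, c, d, e].Nodup) : False := by
  simp only [List.nodup_cons, List.mem_cons, List.not_mem_nil, or_false, not_or,
    not_false_eq_true, List.nodup_nil, and_true] at hnd
  obtain ⟨⟨hab, hac, had, hae⟩, ⟨hbc, hbd, hbe⟩, ⟨hcd, hce⟩, hde⟩ := hnd
  have mt := fun {p q s : α} (hp : p ∈ B) (hq : q ∈ B) (hs : s ∈ B) (h1 : p ≠ q) (h2 : p ≠ s)
    (h4 : q ≠ s) (j : CoBlock 𝓑 x y p q) => coBlock_matching S hB hxy hx hy hp hq hs h1 h2 h4 j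
  have q1 := coBlock_quad S hB hxE hyE hxy hx hy ha hb hc hd hab hac had hbc hbd hcd
  have q2 := coBlock_quad S hB hxE hyE hxy hx hy ha hb hc he hab hac hae hbc hbe hce
  have abc := mt ha hb hc hab hac hbc
  have abe := mt ha hb he hab hae hbe
  have ace := mt ha hc he hac hae hce
  have ade := mt ha hd he had hae hde
  have abd := mt ha hb hd hab had hbd
  have acd := mt ha hc hd hac had hcd
  have cde := mt hc hd he hcd hce hde
  have bde := mt hb hd he hbd hbe hde
  rcases q1 with ⟨h1, h2⟩ | ⟨h1, h2⟩ | ⟨h1, h2⟩ <;>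
    rcases q2 with ⟨h4, h6⟩ | ⟨h4, h6⟩ | ⟨h4, h6⟩
  exacts [cde h2 h6, abc h1 h4, abe h1 h4, abc h4 h1, bde h2 h6, ace h1 h4, abd h4 h1, acd h4 h1,
    ade h1 h4]

/-- If `E` has at least five points, then either one block contains all points of `E` with at most
one exception, or `E` consists of four points of a block and two points outside it. -/
lemma incidence_core
    (S : BlockSystem E 𝓑)
    (hfive : ∃ a ∈ E, ∃ b ∈ E, ∃ c ∈ E, ∃ d ∈ E, ∃ e ∈ E, [a, b, c, d, e].Nodup) :
    (∃ B ∈ 𝓑, ∃ v, ∀ e ∈ E, e ≠ v → e ∈ B) ∨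
    (∃ B ∈ 𝓑, ∃ a b c d x y, a ∈ B ∧ b ∈ B ∧ c ∈ B ∧ d ∈ B ∧ x ∉ B ∧ y ∉ B ∧ x ≠ y ∧
      E = {x, y, a, b, c, d}) := by
  -- some block contains four points
  obtain ⟨B, hB, a, b, c, d, ha, hb, hc, hd, hnd⟩ : ∃ B ∈ 𝓑, ∃ a b c d, a ∈ B ∧ b ∈ B ∧
      c ∈ B ∧ d ∈ B ∧ [a, b, c, d].Nodup := by
    obtain ⟨a, ha, b, hb, c, hc, d, hd, e, he, hnd⟩ := hfive
    obtain ⟨B, hB, h⟩ := S.h5 a ha b hb c hc d hd e he hnd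
    simp only [List.nodup_cons, List.mem_cons, List.not_mem_nil, or_false, not_or,
      not_false_eq_true, List.nodup_nil, and_true] at hnd ⊢
    refine ⟨B, hB, ?_⟩
    rcases h with h | h | h | h | h
    · exact ⟨a, b, c, d, by tauto⟩
    · exact ⟨a, b, c, e, by tauto⟩
    · exact ⟨a, b, d, e, by tauto⟩
    · exact ⟨a, c, d, e, by tauto⟩
    · exact ⟨b, c, d, e, by tauto⟩
  by_cases hout : ∃ v, ∀ e ∈ E, e ≠ v → e ∈ B
  · exact Or.inl ⟨B, hB, hout⟩
  right
  push Not at hout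
  obtain ⟨x, hxE, -, hx⟩ := hout a
  obtain ⟨y, hyE, hyx, hy⟩ := hout x
  have hX' := S.hX B hB a ha b hb c hc d hd hnd
  have hnd' := hnd
  simp only [List.nodup_cons, List.mem_cons, List.not_mem_nil, or_false, not_or,
    not_false_eq_true, List.nodup_nil, and_true] at hnd'
  obtain ⟨⟨hab, hac, had⟩, ⟨hbc, hbd⟩, hcd⟩ := hnd'
  have hne : ∀ z ∉ B, ∀ p ∈ B, p ≠ z := fun z hz p hp h => hz (h ▸ hp)
  refine ⟨B, hB, a, b, c, d, x, y, ha, hb, hc, hd, hx, hy, hyx.symm, ?_⟩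
  apply Set.Subset.antisymm
  swap
  · have := S.hE B hB
    rintro z (h | h | h | h | h | h) <;> subst h <;> first | assumption | (apply this; assumption)
  intro z hzE
  by_contra hz
  simp only [Set.mem_insert_iff, Set.mem_singleton_iff, not_or] at hz
  obtain ⟨hzx, hzy, hza, hzb, hzc, hzd⟩ := hz
  -- `B` has no fifth point, so `z` is outside `B`
  have hzB : z ∉ B := fun hzB => no_five S hB hxE hyE hyx.symm hx hy ha hb hc hd hzB (by
    simp [hab, hac, had, hbc, hbd, hcd, Ne.symm hza, Ne.symm hzb, Ne.symm hzc, Ne.symm hzd])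
  -- two pairs of outside points with a common member cannot join the same pair of points of `B`:
  -- all five points would lie in one block, which misses the other two points of `B`
  have clash : ∀ u v w p q r s : α, u ∈ E → v ∈ E → w ∈ E → u ∉ B → v ∉ B → w ∉ B →
      u ≠ v → u ≠ w → v ≠ w → p ∈ B → q ∈ B → r ∈ B → s ∈ B → p ≠ q → p ≠ r → p ≠ s →
      q ≠ r → q ≠ s → r ≠ s → CoBlock 𝓑 u v p q → CoBlock 𝓑 u w p q → False := by
    intro u v w p q r s huE hvE hwE hu hv hw huv huw hvw hp hq hr hs hpq hpr hps hqr hqs hrs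
    rintro ⟨B1, hB1, u1, v1, p1, q1⟩ ⟨B2, hB2, u2, w2, p2, q2⟩
    have hpu := hne u hu p hp
    have hqu := hne u hu q hq
    have h12 := S.h3 B1 hB1 B2 hB2 p q u hpq hpu hqu p1 q1 u1 p2 q2 u2
    have out : ∀ t ∈ B, p ≠ t → q ≠ t → t ∉ B2 := fun t ht hpt hqt ht2 =>
      hu (S.h3 B2 hB2 B hB p q t hpq hpt hqt p2 q2 ht2 hp hq ht u2)
    refine no_five S hB2 (S.hE B hB hr) (S.hE B hB hs) hrs (out r hr hpr hqr)
      (out s hs hps hqs) p2 q2 u2 (h12 v1) w2 ?_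
    simp [hpq, hpu, hqu, hne v hv p hp, hne w hw p hp, hne v hv q hq, hne w hw q hq, huv, huw,
      hvw]
  -- a pair whose blocks all contain a third point of `B` is never joined from outside, so of the
  -- three pairings of `a, b, c, d` the crossing one is excluded
  have cross : ∀ u v p q r : α, u ∉ B → p ∈ B → q ∈ B → r ∈ B → p ≠ q → p ≠ r → q ≠ r →
      (∀ B' ∈ 𝓑, p ∈ B' → q ∈ B' → r ∈ B') → ¬ CoBlock 𝓑 u v p q := by
    rintro u v p q r hu hp hq hr hpq hpr hqr h ⟨B1, hB1, u1, v1, p1, q1⟩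
    exact hu (S.h3 B1 hB1 B hB p q r hpq hpr hqr p1 q1 (h B1 hB1 p1 q1) hp hq hr u1)
  have jsw : ∀ {u v p q : α}, CoBlock 𝓑 u v p q → CoBlock 𝓑 v u p q := by
    rintro u v p q ⟨B1, h1, h2, h4, h6⟩
    exact ⟨B1, h1, h4, h2, h6⟩
  have qxy := coBlock_quad S hB hxE hyE hyx.symm hx hy ha hb hc hd hab hac had hbc hbd hcd
  have qxz := coBlock_quad S hB hxE hzE (Ne.symm hzx) hx hzB ha hb hc hd hab hac had hbc
    hbd hcd
  have qyz := coBlock_quad S hB hyE hzE (Ne.symm hzy) hy hzB ha hb hc hd hab hac had hbc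
    hbd hcd
  have clx := fun p q r s => clash x y z p q r s hxE hyE hzE hx hy hzB hyx.symm (Ne.symm hzx)
    (Ne.symm hzy)
  have cly := fun p q r s => clash y x z p q r s hyE hxE hzE hy hx hzB hyx (Ne.symm hzy)
    (Ne.symm hzx)
  have clz := fun p q r s => clash z x y p q r s hzE hxE hyE hzB hx hy hzx hzy hyx.symm
  have x1 := clx a b c d ha hb hc hd hab hac had hbc hbd hcd
  have x2 := clx a c b d ha hc hb hd hac hab had (Ne.symm hbc) hcd hbd
  have x3 := clx a d b c ha hd hb hc had hab hac (Ne.symm hbd) (Ne.symm hcd) hbc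
  have y1 := fun j => cly a b c d ha hb hc hd hab hac had hbc hbd hcd (jsw j)
  have y2 := fun j => cly a c b d ha hc hb hd hac hab had (Ne.symm hbc) hcd hbd (jsw j)
  have y3 := fun j => cly a d b c ha hd hb hc had hab hac (Ne.symm hbd) (Ne.symm hcd) hbc (jsw j)
  have z1 := fun j k => clz a b c d ha hb hc hd hab hac had hbc hbd hcd (jsw j) (jsw k)
  have z2 := fun j k => clz a c b d ha hc hb hd hac hab had (Ne.symm hbc) hcd hbd (jsw j) (jsw k)
  have z3 := fun j k => clz a d b c ha hd hb hc had hab hac (Ne.symm hbd) (Ne.symm hcd) hbc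
    (jsw j) (jsw k)
  -- the three pairs from `x, y, z` induce different pairings, but only two pairings remain
  have fin1 : ¬ CoBlock 𝓑 x y a b → ¬ CoBlock 𝓑 x z a b → ¬ CoBlock 𝓑 y z a b → False := by
    intro c1 c2 c3
    rcases qxy with ⟨j, -⟩ | ⟨j, -⟩ | ⟨j, -⟩ <;> rcases qxz with ⟨k, -⟩ | ⟨k, -⟩ | ⟨k, -⟩ <;>
      rcases qyz with ⟨l, -⟩ | ⟨l, -⟩ | ⟨l, -⟩ <;>
      first
        | exact c1 j | exact c2 k | exact c3 l | exact x2 j k | exact x3 j k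
        | exact y2 j l | exact y3 j l | exact z2 k l | exact z3 k l
  have fin2 : ¬ CoBlock 𝓑 x y a c → ¬ CoBlock 𝓑 x z a c → ¬ CoBlock 𝓑 y z a c → False := by
    intro c1 c2 c3
    rcases qxy with ⟨j, -⟩ | ⟨j, -⟩ | ⟨j, -⟩ <;> rcases qxz with ⟨k, -⟩ | ⟨k, -⟩ | ⟨k, -⟩ <;>
      rcases qyz with ⟨l, -⟩ | ⟨l, -⟩ | ⟨l, -⟩ <;>
      first
        | exact c1 j | exact c2 k | exact c3 l | exact x1 j k | exact x3 j k
        | exact y1 j l | exact y3 j l | exact z1 k l | exact z3 k l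
  have fin3 : ¬ CoBlock 𝓑 x y a d → ¬ CoBlock 𝓑 x z a d → ¬ CoBlock 𝓑 y z a d → False := by
    intro c1 c2 c3
    rcases qxy with ⟨j, -⟩ | ⟨j, -⟩ | ⟨j, -⟩ <;> rcases qxz with ⟨k, -⟩ | ⟨k, -⟩ | ⟨k, -⟩ <;>
      rcases qyz with ⟨l, -⟩ | ⟨l, -⟩ | ⟨l, -⟩ <;>
      first
        | exact c1 j | exact c2 k | exact c3 l | exact x2 j k | exact x1 j k
        | exact y2 j l | exact y1 j l | exact z2 k l | exact z1 k l
  rcases hX' with h | h | h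
  · have c1 := cross x y a b c hx ha hb hc hab hac hbc fun B' h1 h2 h4 => (h B' h1 h2 h4).1
    have c2 := cross x z a b c hx ha hb hc hab hac hbc fun B' h1 h2 h4 => (h B' h1 h2 h4).1
    have c3 := cross y z a b c hy ha hb hc hab hac hbc fun B' h1 h2 h4 => (h B' h1 h2 h4).1
    exact fin1 c1 c2 c3
  · have c1 := cross x y a c b hx ha hc hb hac hab (Ne.symm hbc) fun B' h1 h2 h4 => (h B' h1 h2 h4).1
    have c2 := cross x z a c b hx ha hc hb hac hab (Ne.symm hbc) fun B' h1 h2 h4 => (h B' h1 h2 h4).1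
    have c3 := cross y z a c b hy ha hc hb hac hab (Ne.symm hbc) fun B' h1 h2 h4 => (h B' h1 h2 h4).1
    exact fin2 c1 c2 c3
  · have c1 := cross x y a d b hx ha hd hb had hab (Ne.symm hbd) fun B' h1 h2 h4 => (h B' h1 h2 h4).1
    have c2 := cross x z a d b hx ha hd hb had hab (Ne.symm hbd) fun B' h1 h2 h4 => (h B' h1 h2 h4).1
    have c3 := cross y z a d b hy ha hd hb had hab (Ne.symm hbd) fun B' h1 h2 h4 => (h B' h1 h2 h4).1
    exact fin3 c1 c2 c3

end Combinatorics

/-! ### Affine dependences between extreme points -/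

section Dependence

variable {K : Set (Euc 3)} {m : ℕ} {p : Fin m → Euc 3} {w : Fin m → ℝ}

/-- In an affine dependence between extreme points there is never exactly one positive weight,
since an extreme point is not a convex combination of other points. -/
lemma exists_second_pos (hK : Convex ℝ K) (hp : ∀ i, p i ∈ Set.extremePoints ℝ K)
    (hinj : Function.Injective p) (hw : ∑ i, w i = 0) (hwp : ∑ i, w i • p i = 0)
    {i : Fin m} (hi : 0 < w i) : ∃ j, j ≠ i ∧ 0 < w j := by
  by_contra! hcon
  have hC := (hK.mem_extremePoints_iff_convex_sdiff.1 (hp i)).2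
  have h1 : ∑ j ∈ Finset.univ.erase i, w j = - w i := by
    have := Finset.add_sum_erase Finset.univ w (Finset.mem_univ i)
    linarith
  have h2 : ∑ j ∈ Finset.univ.erase i, w j • p j = - (w i • p i) := by
    have := Finset.add_sum_erase Finset.univ (fun j => w j • p j) (Finset.mem_univ i)
    rw [hwp] at this
    exact eq_neg_of_add_eq_zero_right this
  have h3 : ∑ j ∈ Finset.univ.erase i, (-(w i)⁻¹ * w j) • p j ∈ K \ {p i} := by
    refine hC.sum_mem (fun j hj => ?_) ?_ (fun j hj => ⟨(hp j).1, ?_⟩)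
    · have := hcon j (Finset.ne_of_mem_erase hj)
      have h4 : 0 < (w i)⁻¹ := inv_pos.2 hi
      nlinarith
    · rw [← Finset.mul_sum, h1]
      field_simp
    · exact fun h => Finset.ne_of_mem_erase hj (hinj h)
  apply h3.2
  simp_rw [mul_smul]
  rw [← Finset.smul_sum, h2, smul_neg, neg_smul, neg_neg, smul_smul, inv_mul_cancel₀ hi.ne',
    one_smul]
  rfl

/-- A supporting plane through the positive part of an affine dependence contains its
whole support. -/
lemma eq_of_pos_eq {g : Euc 3 →ₗ[ℝ] ℝ} {k : ℝ} (hg : ∀ x ∈ K, g x ≤ k)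
    (hp : ∀ i, p i ∈ Set.extremePoints ℝ K) (hw : ∑ i, w i = 0) (hwp : ∑ i, w i • p i = 0)
    (hpos : ∀ i, 0 < w i → g (p i) = k) {i : Fin m} (hi : w i ≠ 0) : g (p i) = k := by
  have h1 : ∑ i, w i * (k - g (p i)) = 0 := by
    have := congrArg g hwp
    simp only [map_sum, map_smul, smul_eq_mul, map_zero] at this
    simp only [mul_sub, Finset.sum_sub_distrib, this, ← Finset.sum_mul, hw]
    simp
  have h2 : ∀ i ∈ Finset.univ, w i * (k - g (p i)) ≤ 0 := by
    intro i _
    have := hg (p i) (hp i).1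
    rcases lt_or_ge 0 (w i) with h | h
    · simp [hpos i h]
    · nlinarith
  have h3 := (Finset.sum_eq_zero_iff_of_nonpos h2).1 h1 i (Finset.mem_univ i)
  rcases mul_eq_zero.1 h3 with h | h
  · exact absurd h hi
  · linarith

lemma exists_pos_of_sum_zero (hw : ∑ i, w i = 0) (hw0 : w ≠ 0) : ∃ i, 0 < w i := by
  by_contra! h
  apply hw0
  funext i
  exact (Finset.sum_eq_zero_iff_of_nonpos (fun i _ => h i)).1 hw i (Finset.mem_univ i)

/-- An affine dependence between extreme points has at least two positive weights. -/
lemma two_le_card_pos (hK : Convex ℝ K) (hp : ∀ i, p i ∈ Set.extremePoints ℝ K)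
    (hinj : Function.Injective p) (hw : ∑ i, w i = 0) (hwp : ∑ i, w i • p i = 0) (hw0 : w ≠ 0) :
    2 ≤ (Finset.univ.filter fun i => 0 < w i).card := by
  obtain ⟨i, hi⟩ := exists_pos_of_sum_zero hw hw0
  obtain ⟨j, hji, hj⟩ := exists_second_pos hK hp hinj hw hwp hi
  exact Finset.one_lt_card_iff.2 ⟨i, j, by simpa using hi, by simpa using hj, hji.symm⟩

/-- The negative weights are the positive weights of the opposite dependence. -/
lemma two_le_card_neg (hK : Convex ℝ K) (hp : ∀ i, p i ∈ Set.extremePoints ℝ K)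
    (hinj : Function.Injective p) (hw : ∑ i, w i = 0) (hwp : ∑ i, w i • p i = 0) (hw0 : w ≠ 0) :
    2 ≤ (Finset.univ.filter fun i => w i < 0).card := by
  have := two_le_card_pos (w := -w) hK hp hinj (by simpa using hw) (by simpa using hwp)
    (neg_ne_zero.2 hw0)
  simpa using this

lemma card_sign_add (w : Fin m → ℝ) :
    (Finset.univ.filter fun i => 0 < w i).card + (Finset.univ.filter fun i => w i < 0).card +
      (Finset.univ.filter fun i => w i = 0).card = m := by
  have h1 : Disjoint (Finset.univ.filter fun i => 0 < w i)
      (Finset.univ.filter fun i => w i < 0) := by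
    rw [Finset.disjoint_filter]
    intro i _ h
    exact not_lt.2 h.le
  have h2 : Disjoint ((Finset.univ.filter fun i => 0 < w i) ∪
      (Finset.univ.filter fun i => w i < 0)) (Finset.univ.filter fun i => w i = 0) := by
    rw [Finset.disjoint_left]
    intro i hi
    simp only [Finset.mem_union, Finset.mem_filter, Finset.mem_univ, true_and] at hi ⊢
    rcases hi with h | h
    exacts [h.ne', h.ne]
  rw [← Finset.card_union_of_disjoint h1, ← Finset.card_union_of_disjoint h2]
  conv_rhs => rw [← Fintype.card_fin m, ← Finset.card_univ]
  congr 1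
  ext i
  simp only [Finset.mem_union, Finset.mem_filter, Finset.mem_univ, true_and, iff_true]
  rcases lt_trichotomy (w i) 0 with h | h | h <;> tauto

/-- The linear map sending weights `w` to `(∑ wᵢ pᵢ, ∑ wᵢ)`; its kernel consists of the affine
dependences of `p`. -/
def dependenceMap (p : Fin m → Euc 3) : (Fin m → ℝ) →ₗ[ℝ] (Euc 3 × ℝ) :=
  (Fintype.linearCombination ℝ p).prod (Fintype.linearCombination ℝ fun _ => (1 : ℝ))

lemma dependenceMap_apply (p : Fin m → Euc 3) (w : Fin m → ℝ) :
    dependenceMap p w = (∑ i, w i • p i, ∑ i, w i) := by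
  simp [dependenceMap, Fintype.linearCombination_apply]

lemma exists_dependence_of_not_injective (h : ¬ Function.Injective (dependenceMap p)) :
    ∃ w : Fin m → ℝ, w ≠ 0 ∧ ∑ i, w i = 0 ∧ ∑ i, w i • p i = 0 := by
  rw [← LinearMap.ker_eq_bot, Submodule.eq_bot_iff] at h
  push Not at h
  obtain ⟨w, hw, hw0⟩ := h
  rw [LinearMap.mem_ker, dependenceMap_apply, Prod.mk_eq_zero] at hw
  exact ⟨w, hw0, hw.2, hw.1⟩

lemma finrank_euc_prod : Module.finrank ℝ (Euc 3 × ℝ) = 4 := by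
  simp

lemma exists_dependence_five (p : Fin 5 → Euc 3) :
    ∃ w : Fin 5 → ℝ, w ≠ 0 ∧ ∑ i, w i = 0 ∧ ∑ i, w i • p i = 0 := by
  apply exists_dependence_of_not_injective
  intro h
  have := LinearMap.finrank_le_finrank_of_injective h
  rw [finrank_euc_prod] at this
  simp at this

lemma exists_dependence_four (p : Fin 4 → Euc 3) {f : Euc 3 →ₗ[ℝ] ℝ} {k : ℝ} (hf : f ≠ 0)
    (hk : ∀ i, f (p i) = k) :
    ∃ w : Fin 4 → ℝ, w ≠ 0 ∧ ∑ i, w i = 0 ∧ ∑ i, w i • p i = 0 := by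
  apply exists_dependence_of_not_injective
  intro h
  rw [LinearMap.injective_iff_surjective_of_finrank_eq_finrank
    (by rw [finrank_euc_prod]; simp)] at h
  -- the range satisfies the nontrivial linear equation `f y = k * s`
  apply hf
  ext1 x
  obtain ⟨w, hw⟩ := h (x, 0)
  rw [dependenceMap_apply, Prod.mk_inj] at hw
  rw [← hw.1]
  simp [map_sum, hk, ← Finset.sum_mul, hw.2]

end Dependence

/-! ### Supporting planes as blocks -/

section Blocks

/-- The traces on the extreme points of `K` of the planes `f = k` bounding a half-space that
contains `K`; the empty trace of a plane not touching `K` is allowed. -/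
def supportBlocks (K : Set (Euc 3)) : Set (Set (Euc 3)) :=
  {B | ∃ (f : Euc 3 →ₗ[ℝ] ℝ) (k : ℝ), f ≠ 0 ∧ (∀ x ∈ K, f x ≤ k) ∧
    B = {e | e ∈ Set.extremePoints ℝ K ∧ f e = k}}

variable {K : Set (Euc 3)}

/-- Four coplanar extreme points form a convex quadrilateral: their affine dependence has no
zero weight and its signs split the points into two pairs. -/
lemma exists_quad_dependence (hK : Convex ℝ K) {p : Fin 4 → Euc 3}
    (hp : ∀ i, p i ∈ Set.extremePoints ℝ K) (hinj : Function.Injective p)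
    {f : Euc 3 →ₗ[ℝ] ℝ} {k : ℝ} (hf : f ≠ 0) (hk : ∀ i, f (p i) = k) :
    ∃ w : Fin 4 → ℝ, ∑ i, w i = 0 ∧ ∑ i, w i • p i = 0 ∧ (∀ i, w i ≠ 0) ∧ 0 < w 0 ∧
      (Finset.univ.filter fun i => 0 < w i).card = 2 := by
  obtain ⟨w, hw0, hw, hwp⟩ := exists_dependence_four p hf hk
  have main : ∀ w : Fin 4 → ℝ, w ≠ 0 → ∑ i, w i = 0 → ∑ i, w i • p i = 0 →
      (∀ i, w i ≠ 0) ∧ (Finset.univ.filter fun i => 0 < w i).card = 2 := by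
    intro w hw0 hw hwp
    have h1 := two_le_card_pos hK hp hinj hw hwp hw0
    have h2 := two_le_card_neg hK hp hinj hw hwp hw0
    have h3 := card_sign_add w
    refine ⟨fun i hi => ?_, by omega⟩
    have : (Finset.univ.filter fun i => w i = 0).card = 0 := by omega
    rw [Finset.card_eq_zero] at this
    have hmem : i ∈ (Finset.univ.filter fun i => w i = 0) := by simp [hi]
    rw [this] at hmem
    simp at hmem
  obtain ⟨hnz, hc⟩ := main w hw0 hw hwp
  rcases lt_or_gt_of_ne (hnz 0) with h | h
  · have hw' : ∑ i, (-w) i = 0 := by simpa using hw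
    have hwp' : ∑ i, (-w) i • p i = 0 := by simpa using hwp
    obtain ⟨hnz', hc'⟩ := main (-w) (neg_ne_zero.2 hw0) hw' hwp'
    exact ⟨-w, hw', hwp', hnz', by simpa using h, hc'⟩
  · exact ⟨w, hw, hwp, hnz, h, hc⟩

lemma injective_of_nodup_four {α : Type*} {a b c d : α} (h : [a, b, c, d].Nodup) :
    Function.Injective ![a, b, c, d] := by
  have := List.nodup_iff_injective_get.1 h
  intro i j hij
  apply this
  fin_cases i <;> fin_cases j <;> simp_all

lemma injective_of_nodup_five {α : Type*} {a b c d e : α} (h : [a, b, c, d, e].Nodup) :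
    Function.Injective ![a, b, c, d, e] := by
  have := List.nodup_iff_injective_get.1 h
  intro i j hij
  apply this
  fin_cases i <;> fin_cases j <;> simp_all

/-- If every two extreme points lie in a common supporting plane, the supporting planes form a
block system on the extreme points. -/
lemma blockSystem (hK : Convex ℝ K)
    (hS : ∀ e ∈ Set.extremePoints ℝ K, ∀ e' ∈ Set.extremePoints ℝ K, e ≠ e' →
      ∃ (f : Euc 3 →ₗ[ℝ] ℝ) (k : ℝ), f ≠ 0 ∧ (∀ x ∈ K, f x ≤ k) ∧ f e = k ∧ f e' = k) :
    BlockSystem (Set.extremePoints ℝ K) (supportBlocks K) where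
  hE := by
    rintro B ⟨f, k, -, -, rfl⟩ e he
    exact he.1
  h3 := by
    rintro B ⟨f, k, hf, hfk, rfl⟩ B' ⟨g, l, hg, hgl, rfl⟩ a b c hab hac hbc ha hb hc ha' hb' hc'
      d hd
    by_cases hda : d = a
    · rwa [hda]
    by_cases hdb : d = b
    · rwa [hdb]
    by_cases hdc : d = c
    · rwa [hdc]
    have hnd : [a, b, c, d].Nodup := by
      simp [hab, hac, hbc, Ne.symm hda, Ne.symm hdb, Ne.symm hdc]
    obtain ⟨w, hw, hwp, hnz, -, -⟩ := exists_quad_dependence (p := ![a, b, c, d]) hK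
      (by intro i; fin_cases i; exacts [ha.1, hb.1, hc.1, hd.1])
      (injective_of_nodup_four hnd) hf
      (by intro i; fin_cases i; exacts [ha.2, hb.2, hc.2, hd.2])
    refine ⟨hd.1, ?_⟩
    -- `d` is an affine combination of `a, b, c`, on which `g = l`
    have h1 := congrArg g hwp
    simp only [Fin.sum_univ_four, map_add, map_smul, smul_eq_mul, map_zero, Matrix.cons_val] at h1 hw
    rw [ha'.2, hb'.2, hc'.2] at h1
    have h2 : w 3 * (g d - l) = 0 := by linear_combination h1 - l * hw
    rcases mul_eq_zero.1 h2 with h | h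
    · exact absurd h (hnz 3)
    · linarith
  hX := by
    rintro B ⟨f, k, hf, hfk, rfl⟩ a ha b hb c hc d hd hnd
    have hp : ∀ i, ![a, b, c, d] i ∈ Set.extremePoints ℝ K := by
      intro i; fin_cases i; exacts [ha.1, hb.1, hc.1, hd.1]
    obtain ⟨w, hw, hwp, hnz, h0, hcard⟩ := exists_quad_dependence (p := ![a, b, c, d]) hK hp
      (injective_of_nodup_four hnd) hf
      (by intro i; fin_cases i; exacts [ha.2, hb.2, hc.2, hd.2])
    obtain ⟨j, hj0, hj⟩ := exists_second_pos hK hp (injective_of_nodup_four hnd) hw hwp h0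
    -- the positive weights are exactly those of index `0` and `j`
    have hP : ∀ i, 0 < w i → i = 0 ∨ i = j := by
      have hsub : ({0, j} : Finset (Fin 4)) ⊆ Finset.univ.filter fun i => 0 < w i := by
        intro i hi
        simp only [Finset.mem_insert, Finset.mem_singleton] at hi
        rcases hi with rfl | rfl <;> simpa
      have heq := Finset.eq_of_subset_of_card_le hsub (by
        rw [hcard, Finset.card_pair hj0.symm])
      intro i hi
      have : i ∈ ({0, j} : Finset (Fin 4)) := by rw [heq]; simpa using hi
      simpa using this
    have key : ∀ B' ∈ supportBlocks K, a ∈ B' → ![a, b, c, d] j ∈ B' →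
        ∀ i, ![a, b, c, d] i ∈ B' := by
      rintro B' ⟨g, l, hg, hgl, rfl⟩ ha' hj' i
      refine ⟨hp i, eq_of_pos_eq hgl hp hw hwp (fun i hi => ?_) (hnz i)⟩
      rcases hP i hi with rfl | rfl
      exacts [ha'.2, hj'.2]
    fin_cases j
    · exact absurd rfl hj0
    · exact Or.inl fun B' hB' h1 h2 => ⟨key B' hB' h1 h2 2, key B' hB' h1 h2 3⟩
    · exact Or.inr (Or.inl fun B' hB' h1 h2 => ⟨key B' hB' h1 h2 1, key B' hB' h1 h2 3⟩)
    · exact Or.inr (Or.inr fun B' hB' h1 h2 => ⟨key B' hB' h1 h2 1, key B' hB' h1 h2 2⟩)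
  h5 := by
    intro a ha b hb c hc d hd e he hnd
    have hp : ∀ i, ![a, b, c, d, e] i ∈ Set.extremePoints ℝ K := by
      intro i; fin_cases i; exacts [ha, hb, hc, hd, he]
    have hinj := injective_of_nodup_five hnd
    -- if just two weights are positive, a supporting plane through these two points contains
    -- the support of the dependence
    have main : ∀ w : Fin 5 → ℝ, ∑ i, w i = 0 → ∑ i, w i • ![a, b, c, d, e] i = 0 →
        (Finset.univ.filter fun i => 0 < w i).card = 2 →
        ∃ B ∈ supportBlocks K, ∀ i, w i ≠ 0 → ![a, b, c, d, e] i ∈ B := by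
      intro w hw hwp hcard
      obtain ⟨i, j, hij, hP⟩ := Finset.card_eq_two.1 hcard
      obtain ⟨f, k, hf, hfk, hfi, hfj⟩ := hS _ (hp i) _ (hp j) (hinj.ne hij)
      refine ⟨_, ⟨f, k, hf, hfk, rfl⟩, fun l hl => ⟨hp l, ?_⟩⟩
      refine eq_of_pos_eq hfk hp hw hwp (fun l hl => ?_) hl
      have : l ∈ ({i, j} : Finset (Fin 5)) := by rw [← hP]; simpa using hl
      simp only [Finset.mem_insert, Finset.mem_singleton] at this
      rcases this with rfl | rfl
      exacts [hfi, hfj]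
    obtain ⟨w, hw0, hw, hwp⟩ := exists_dependence_five ![a, b, c, d, e]
    have h1 := two_le_card_pos (m := 5) hK hp hinj hw hwp hw0
    have h2 := two_le_card_neg (m := 5) hK hp hinj hw hwp hw0
    have h3 := card_sign_add w
    obtain ⟨B, hB, hBw⟩ : ∃ B ∈ supportBlocks K, ∀ i, w i ≠ 0 → ![a, b, c, d, e] i ∈ B := by
      by_cases hc2 : (Finset.univ.filter fun i => 0 < w i).card = 2
      · exact main w hw hwp hc2
      · have hc3 : (Finset.univ.filter fun i => w i < 0).card = 2 := by omega
        simpa using main (-w) (by simpa using hw) (by simpa using hwp) (by simpa using hc3)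
    have hz : (Finset.univ.filter fun i => w i = 0).card ≤ 1 := by omega
    obtain ⟨i0, hi0⟩ : ∃ i0, ∀ i, i ≠ i0 → w i ≠ 0 := by
      rw [Finset.card_le_one_iff_subset_singleton] at hz
      obtain ⟨i0, hi0⟩ := hz
      refine ⟨i0, fun i hi h => hi ?_⟩
      have : i ∈ ({i0} : Finset (Fin 5)) := hi0 (by simpa using h)
      simpa using this
    have hmem : ∀ i, i ≠ i0 → ![a, b, c, d, e] i ∈ B := fun i hi => hBw i (hi0 i hi)
    refine ⟨B, hB, ?_⟩
    fin_cases i0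
    · exact Or.inr <| Or.inr <| Or.inr <| Or.inr
        ⟨hmem 1 (by decide), hmem 2 (by decide), hmem 3 (by decide), hmem 4 (by decide)⟩
    · exact Or.inr <| Or.inr <| Or.inr <| Or.inl
        ⟨hmem 0 (by decide), hmem 2 (by decide), hmem 3 (by decide), hmem 4 (by decide)⟩
    · exact Or.inr <| Or.inr <| Or.inl
        ⟨hmem 0 (by decide), hmem 1 (by decide), hmem 3 (by decide), hmem 4 (by decide)⟩
    · exact Or.inr <| Or.inl
        ⟨hmem 0 (by decide), hmem 1 (by decide), hmem 2 (by decide), hmem 4 (by decide)⟩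
    · exact Or.inl
        ⟨hmem 0 (by decide), hmem 1 (by decide), hmem 2 (by decide), hmem 3 (by decide)⟩

end Blocks

/-! ### Cones -/

section Cone

/-- A nonzero linear functional does not attain an upper bound on an open set. -/
lemma ne_of_bound {Ω : Set (Euc 3)} (hop : IsOpen Ω) {f : Euc 3 →ₗ[ℝ] ℝ} (hf : f ≠ 0) {k : ℝ}
    (hb : ∀ x ∈ Ω, f x ≤ k) {x : Euc 3} (hx : x ∈ Ω) : f x < k := by
  refine lt_of_le_of_ne (hb x hx) fun hxk => ?_
  obtain ⟨u, hu⟩ : ∃ u, 0 < f u := by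
    obtain ⟨u, hu⟩ : ∃ u, f u ≠ 0 := by
      by_contra! h
      exact hf (LinearMap.ext h)
    rcases lt_or_gt_of_ne hu with h | h
    · exact ⟨-u, by simpa using h⟩
    · exact ⟨u, h⟩
  have hc : ContinuousAt (fun t : ℝ => x + t • u) 0 := by fun_prop
  have hev : ∀ᶠ t : ℝ in nhds 0, x + t • u ∈ Ω :=
    hc.eventually_mem (by simpa using hop.mem_nhds hx)
  obtain ⟨ε, hε, hball⟩ := Metric.eventually_nhds_iff.1 hev
  have h1 := hb _ (hball (y := ε / 2) (by simp [abs_of_pos hε, hε]))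
  rw [map_add, map_smul, smul_eq_mul, hxk] at h1
  nlinarith

/-- If all extreme points but one lie in a plane, the domain is a cone. The base is described as
the set of points `b` of the plane whose midpoint with the vertex lies in the domain. -/
lemma isCone_of_plane {Ω : Set (Euc 3)} (hne : Ω.Nonempty) (hop : IsOpen Ω)
    (hbd : Bornology.IsBounded Ω) (hcv : Convex ℝ Ω) {f : Euc 3 →ₗ[ℝ] ℝ} {k : ℝ} (hf : f ≠ 0)
    {v : Euc 3} (hv : ∀ e ∈ Set.extremePoints ℝ (closure Ω), e ≠ v → f e = k) : IsCone Ω := by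
  have hfc : Continuous f := f.continuous_of_finiteDimensional
  have hK : IsCompact (closure Ω) := hbd.isCompact_closure
  have hKc : Convex ℝ (closure Ω) := hcv.closure
  have hKM := closure_convexHull_extremePoints hK hKc
  have hinter : interior Ω = Ω := hop.interior_eq
  have hsub : Ω ⊆ closure Ω := subset_closure
  -- `Ω` is not contained in a plane
  have hplane : ∀ (l : ℝ), ¬ ∀ x ∈ closure Ω, f x = l := by
    intro l h
    obtain ⟨x, hx⟩ := hne
    exact (ne_of_bound hop hf (fun y hy => (h y (hsub hy)).le) hx).ne (h x (hsub hx))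
  have hlevel : ∀ l : ℝ, Convex ℝ {x | f x = l} := fun l => convex_hyperplane f.isLinear l
  have hlevelc : ∀ l : ℝ, IsClosed {x | f x = l} := fun l => isClosed_eq hfc continuous_const
  have hmin : ∀ C : Set (Euc 3), Convex ℝ C → IsClosed C →
      Set.extremePoints ℝ (closure Ω) ⊆ C → closure Ω ⊆ C := by
    intro C h1 h2 h3
    rw [← hKM]
    exact closure_minimal (convexHull_min h3 h1) h2
  have hvE : v ∈ Set.extremePoints ℝ (closure Ω) := by
    by_contra h
    refine hplane k (hmin _ (hlevel k) (hlevelc k) fun e he => hv e he ?_)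
    rintro rfl
    exact h he
  have hvk : f v ≠ k := by
    intro h
    refine hplane k (hmin _ (hlevel k) (hlevelc k) fun e he => ?_)
    by_cases hev : e = v
    · rw [hev]
      exact h
    · exact hv e he hev
  have hvK : v ∈ closure Ω := hvE.1
  set F : Set (Euc 3) := closure Ω ∩ {x | f x = k} with hF
  have hFc : Convex ℝ F := hKc.inter (hlevel k)
  have hFk : IsCompact F := hK.inter_right (hlevelc k)
  have hFne : F.Nonempty := by
    by_contra h
    rw [Set.not_nonempty_iff_eq_empty] at h
    refine hplane (f v) (hmin _ (hlevel _) (hlevelc _) fun e he => ?_)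
    by_cases hev : e = v
    · rw [hev]
      exact rfl
    · have : e ∈ F := ⟨he.1, hv e he hev⟩
      rw [h] at this
      exact this.elim
  -- every point of the closure lies on a segment from `v` to `F`
  have hjoin : ∀ x ∈ closure Ω, ∃ b ∈ F, ∃ t : ℝ, 0 ≤ t ∧ t ≤ 1 ∧ x = (1 - t) • v + t • b := by
    have hJ : convexHull ℝ (insert v F) =
        (fun q : ℝ × Euc 3 => (1 - q.1) • v + q.1 • q.2) '' (Set.Icc (0 : ℝ) 1 ×ˢ F) := by
      rw [convexHull_insert hFne, hFc.convexHull_eq]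
      ext x
      simp only [mem_convexJoin, Set.mem_singleton_iff, exists_eq_left, Set.mem_image,
        Set.mem_prod, Set.mem_Icc, Prod.exists]
      constructor
      · rintro ⟨b, hb, a, t, ha, ht, hat, rfl⟩
        exact ⟨t, b, ⟨⟨ht, by linarith⟩, hb⟩, by rw [← hat]; simp⟩
      · rintro ⟨t, b, ⟨⟨h0, h1⟩, hb⟩, rfl⟩
        exact ⟨b, hb, 1 - t, t, by linarith, h0, by ring, rfl⟩
    have hcomp : IsCompact (convexHull ℝ (insert v F)) := by
      rw [hJ]
      refine (isCompact_Icc.prod hFk).image ?_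
      fun_prop
    intro x hx
    have hx' := hmin _ (convex_convexHull ℝ (insert v F)) hcomp.isClosed (fun e he => by
      apply subset_convexHull
      by_cases hev : e = v
      · exact Or.inl hev
      · exact Or.inr ⟨he.1, hv e he hev⟩) hx
    rw [hJ] at hx'
    obtain ⟨⟨t, b⟩, ⟨⟨h0, h1⟩, hb⟩, rfl⟩ := hx'
    exact ⟨b, hb, t, h0, h1, rfl⟩
  -- interior points lie strictly between `v` and `F`
  have hjoin' : ∀ x ∈ Ω, ∃ b ∈ F, ∃ t : ℝ, 0 < t ∧ t < 1 ∧ x = (1 - t) • v + t • b := by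
    -- normalised height: `0` at `v` and `1` on `F`
    set g : Euc 3 →ₗ[ℝ] ℝ := (k - f v)⁻¹ • f with hg
    have hkv : k - f v ≠ 0 := sub_ne_zero.2 hvk.symm
    have hg0 : g ≠ 0 := smul_ne_zero (inv_ne_zero hkv) hf
    have hgx : ∀ b ∈ F, ∀ t : ℝ, g ((1 - t) • v + t • b) = g v + t := by
      intro b hb t
      have hbk : f b = k := hb.2
      simp only [hg, LinearMap.smul_apply, map_add, map_smul, smul_eq_mul, hbk]
      field_simp
      ring
    intro x hx
    obtain ⟨b, hb, t, h0, h1, rfl⟩ := hjoin x (hsub hx)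
    refine ⟨b, hb, t, ?_, ?_, rfl⟩
    · have := ne_of_bound hop (f := -g) (neg_ne_zero.2 hg0) (k := -g v) (fun y hy => by
        obtain ⟨c, hc, s, s0, s1, rfl⟩ := hjoin y (hsub hy)
        rw [LinearMap.neg_apply, hgx c hc]
        linarith) hx
      rw [LinearMap.neg_apply, hgx b hb] at this
      linarith
    · have := ne_of_bound hop hg0 (k := g v + 1) (fun y hy => by
        obtain ⟨c, hc, s, s0, s1, rfl⟩ := hjoin y (hsub hy)
        rw [hgx c hc]
        linarith) hx
      rw [hgx b hb] at this
      linarith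
  have hseg : ∀ x ∈ Ω, ∀ y ∈ closure Ω, openSegment ℝ x y ⊆ Ω := by
    intro x hx y hy
    have := hcv.openSegment_interior_closure_subset_interior (by rwa [hinter]) hy (x := x)
    rwa [hinter] at this
  set M : Euc 3 → Euc 3 := fun b => (1 / 2 : ℝ) • v + (1 / 2 : ℝ) • b with hM
  have hMc : Continuous M := by fun_prop
  set B : Set (Euc 3) := {b | f b = k ∧ M b ∈ Ω} with hB
  have hBF : B ⊆ F := by
    rintro b ⟨hbk, hbM⟩
    obtain ⟨c, hc, t, h0, h1, h⟩ := hjoin _ (hsub hbM)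
    have hck : f c = k := hc.2
    have ht := congrArg f h
    simp only [hM, map_add, map_smul, smul_eq_mul, hbk, hck] at ht
    have ht2 : t = 1 / 2 := by
      have : (t - 1 / 2) * (k - f v) = 0 := by linear_combination -ht
      rcases mul_eq_zero.1 this with h | h
      · linarith
      · exact absurd (sub_eq_zero.1 h).symm hvk
    have : b = c := by
      subst ht2
      have h2 : (1 / 2 : ℝ) • b = (1 / 2 : ℝ) • c := by
        have h3 : (1 - 1 / 2 : ℝ) = 1 / 2 := by norm_num
        rw [h3] at h
        exact add_left_cancel h
      exact smul_right_injective _ (by norm_num : (1 / 2 : ℝ) ≠ 0) h2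
    rwa [this]
  have hunion : Ω = ⋃ b ∈ B, openSegment ℝ v b := by
    ext x
    simp only [Set.mem_iUnion, exists_prop]
    constructor
    · intro hx
      obtain ⟨b, hb, t, h0, h1, rfl⟩ := hjoin' x hx
      refine ⟨b, ⟨hb.2, ?_⟩, 1 - t, t, by linarith, h0, by ring, rfl⟩
      -- the midpoint of `v` and `b` lies on one of the segments from `x` to `v` or to `b`
      rcases lt_trichotomy t (1 / 2) with ht | ht | ht
      · refine hseg _ hx b hb.1 ⟨1 / (2 * (1 - t)), 1 - 1 / (2 * (1 - t)), ?_, ?_, by ring, ?_⟩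
        · have : 0 < 1 - t := by linarith
          positivity
        · have : 0 < 1 - t := by linarith
          rw [sub_pos, div_lt_one (by linarith)]
          linarith
        · have : 1 - t ≠ 0 := by linarith
          simp only [hM]
          match_scalars
          · field_simp
          · field_simp
            ring
      · have h3 : (1 - t : ℝ) = 1 / 2 := by linarith
        rw [h3, ht] at hx
        exact hx
      · refine hseg _ hx v hvK ⟨1 / (2 * t), 1 - 1 / (2 * t), ?_, ?_, by ring, ?_⟩
        · positivity
        · rw [sub_pos, div_lt_one (by linarith)]
          linarith
        · simp only [hM]
          match_scalars
          · field_simp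
            ring
          · field_simp
    · rintro ⟨b, hb, a, t, ha, ht, hat, rfl⟩
      have hbK := (hBF hb).1
      have hbM := hb.2
      obtain rfl : a = 1 - t := by linarith
      rcases lt_trichotomy t (1 / 2) with h | h | h
      · refine hseg _ hbM v hvK ⟨2 * t, 1 - 2 * t, by linarith, by linarith, by ring, ?_⟩
        simp only [hM]
        match_scalars <;> ring
      · have h3 : (1 - t : ℝ) = 1 / 2 := by linarith
        rw [h3, h]
        exact hbM
      · refine hseg _ hbM b hbK ⟨2 * (1 - t), 1 - 2 * (1 - t), by linarith, by linarith, by ring, ?_⟩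
        simp only [hM]
        match_scalars <;> ring
  have hBne : B.Nonempty := by
    obtain ⟨x, hx⟩ := hne
    rw [hunion] at hx
    simp only [Set.mem_iUnion, exists_prop] at hx
    obtain ⟨b, hb, -⟩ := hx
    exact ⟨b, hb⟩
  have hspan : (affineSpan ℝ B : Set (Euc 3)) = {x | f x = k} := by
    apply Set.Subset.antisymm
    · intro x hx
      refine affineSpan_induction (p := fun x => f x = k) hx (fun b hb => hb.1) ?_
      intro c u w z hu hw hz
      simp [hu, hw, hz]
    · intro x hx
      obtain ⟨b, hb⟩ := hBne
      have hc : ContinuousAt (fun t : ℝ => M (AffineMap.lineMap b x t)) 0 := by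
        apply Continuous.continuousAt
        exact hMc.comp (AffineMap.lineMap_continuous)
      have hev : ∀ᶠ t : ℝ in nhds 0, M (AffineMap.lineMap b x t) ∈ Ω :=
        hc.eventually_mem (by simpa using hop.mem_nhds hb.2)
      obtain ⟨ε, hε, hball⟩ := Metric.eventually_nhds_iff.1 hev
      have h1 := hball (y := ε / 2) (by simp [abs_of_pos hε, hε])
      have hbk : f b = k := hb.1
      have hxk : f x = k := hx
      have h2 : AffineMap.lineMap b x (ε / 2) ∈ B :=
        ⟨by simp [AffineMap.lineMap_apply, hbk, hxk], h1⟩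
      have h3 := AffineMap.lineMap_mem (2 / ε) (subset_affineSpan ℝ B hb)
        (subset_affineSpan ℝ B h2)
      convert h3 using 1
      simp only [AffineMap.lineMap_apply, vsub_eq_sub, vadd_eq_add, add_sub_cancel_right,
        smul_smul]
      rw [show 2 / ε * (ε / 2) = 1 by field_simp]
      simp
  refine ⟨v, B, f, k, hf, fun b hb => hb.1, hvk, hBne, ?_, ?_, ?_, hspan, hunion⟩
  · intro b hb c hc s t hs ht hst
    refine ⟨(hlevel k) hb.1 hc.1 hs ht hst, ?_⟩
    have : M (s • b + t • c) = s • M b + t • M c := by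
      obtain rfl : s = 1 - t := by linarith
      simp only [hM]
      match_scalars <;> ring
    rw [this]
    exact hcv hb.2 hc.2 hs ht hst
  · exact hbd.closure.subset (hBF.trans Set.inter_subset_left)
  · apply Set.Subset.antisymm _ intrinsicInterior_subset
    intro b hb
    rw [mem_intrinsicInterior]
    refine ⟨⟨b, subset_affineSpan ℝ B hb⟩, ?_, rfl⟩
    rw [mem_interior]
    refine ⟨{y | M y ∈ Ω}, fun y hy => ⟨?_, hy⟩,
      hop.preimage (hMc.comp continuous_subtype_val), hb.2⟩
    have := y.2
    rw [← SetLike.mem_coe, hspan] at this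
    exact this

end Cone

/-! ### Common supporting planes and incidences in space -/

section Final

/-- Without extreme lines, any two extreme points of the closure lie in a common supporting
plane: their midpoint is not in `Ω`, as otherwise the line through them would be extreme, and any
plane supporting the closure at the midpoint contains both points. -/
lemma exists_common_support {Ω : Set (Euc 3)} (hne : Ω.Nonempty) (hop : IsOpen Ω)
    (hcv : Convex ℝ Ω) (hnoext : ¬ ∃ L : Set (Euc 3), IsExtremeLine Ω L)
    {e e' : Euc 3} (he : e ∈ Set.extremePoints ℝ (closure Ω))
    (he' : e' ∈ Set.extremePoints ℝ (closure Ω)) (hee : e ≠ e') :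
    ∃ (f : Euc 3 →ₗ[ℝ] ℝ) (k : ℝ), f ≠ 0 ∧ (∀ x ∈ closure Ω, f x ≤ k) ∧ f e = k ∧ f e' = k := by
  have hinter : interior Ω = Ω := hop.interior_eq
  have hseg : ∀ x ∈ Ω, ∀ y ∈ closure Ω, openSegment ℝ x y ⊆ Ω := by
    intro x hx y hy
    have := hcv.openSegment_interior_closure_subset_interior (by rwa [hinter]) hy (x := x)
    rwa [hinter] at this
  set m : Euc 3 := e + (1 / 2 : ℝ) • (e' - e) with hm
  have hmΩ : m ∉ Ω := by
    intro hmem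
    apply hnoext
    refine ⟨{x | ∃ t : ℝ, x = e + t • (e' - e)} ∩ Ω, ⟨⟨m, ⟨1 / 2, rfl⟩, hmem⟩, e, e' - e,
      sub_ne_zero.2 hee.symm, rfl⟩, ?_⟩
    rintro x ⟨hxL, hxf⟩
    have hxK : x ∈ closure Ω := closure_mono Set.inter_subset_right hxL
    have hxΩ : x ∉ Ω := by
      rw [hop.frontier_eq] at hxf
      exact hxf.2
    have hline : IsClosed {x : Euc 3 | ∃ t : ℝ, x = e + t • (e' - e)} := by
      have h1 : {x : Euc 3 | ∃ t : ℝ, x = e + t • (e' - e)} = (line[ℝ, e, e'] : Set (Euc 3)) := by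
        ext x
        rw [SetLike.mem_coe, mem_affineSpan_pair_iff_exists_lineMap_eq]
        simp only [Set.mem_ofPred_eq, AffineMap.lineMap_apply, vsub_eq_sub, vadd_eq_add]
        constructor
        · rintro ⟨t, rfl⟩
          exact ⟨t, add_comm _ _⟩
        · rintro ⟨t, rfl⟩
          exact ⟨t, add_comm _ _⟩
      rw [h1]
      exact AffineSubspace.closed_of_finiteDimensional _
    obtain ⟨t, rfl⟩ : x ∈ {x : Euc 3 | ∃ t : ℝ, x = e + t • (e' - e)} :=
      closure_minimal Set.inter_subset_left hline hxL
    rcases lt_trichotomy t 0 with h | h | h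
    · exfalso
      -- `e` would lie between `x` and `e'`
      refine hee ((mem_extremePoints.1 he).2 _ hxK e' he'.1
        ⟨1 / (1 - t), 1 - 1 / (1 - t), ?_, ?_, by ring, ?_⟩).2.symm
      · have : 0 < 1 - t := by linarith
        positivity
      · rw [sub_pos, div_lt_one (by linarith)]
        linarith
      · have : 1 - t ≠ 0 := by linarith
        match_scalars
        · field_simp
          ring
        · field_simp
          ring
    · simpa [h] using he
    rcases lt_trichotomy t 1 with h1 | h1 | h1
    · exfalso
      apply hxΩ
      rcases lt_trichotomy t (1 / 2) with h2 | h2 | h2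
      · refine hseg m hmem e he.1 ⟨2 * t, 1 - 2 * t, by linarith, by linarith, by ring, ?_⟩
        simp only [hm]
        match_scalars <;> ring
      · rw [h2]
        exact hmem
      · refine hseg m hmem e' he'.1
          ⟨2 * (1 - t), 1 - 2 * (1 - t), by linarith, by linarith, by ring, ?_⟩
        simp only [hm]
        match_scalars <;> ring
    · simpa [h1] using he'
    · exfalso
      -- `e'` would lie between `x` and `e`
      refine hee ((mem_extremePoints.1 he').2 _ hxK e he.1
        ⟨1 / t, 1 - 1 / t, ?_, ?_, by ring, ?_⟩).2
      · positivity
      · rw [sub_pos, div_lt_one (by linarith)]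
        linarith
      · match_scalars
        · field_simp
          ring
        · field_simp
  obtain ⟨f, hf⟩ := geometric_hahn_banach_open_point hcv hop hmΩ
  have hle : ∀ x ∈ closure Ω, f x ≤ f m := by
    intro x hx
    exact closure_minimal (fun y hy => (hf y hy).le)
      (isClosed_le f.continuous continuous_const) hx
  have h1 := hle e he.1
  have h2 := hle e' he'.1
  have h3 : f m = (f e + f e') / 2 := by
    simp only [hm, map_add, map_smul, map_sub, smul_eq_mul]
    ring
  refine ⟨f, f m, ?_, hle, ?_, ?_⟩
  · intro h0
    obtain ⟨x, hx⟩ := hne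
    have h4 := hf x hx
    have h5 : ∀ y, f y = 0 := fun y => by
      have := LinearMap.congr_fun h0 y
      simpa using this
    rw [h5, h5] at h4
    exact lt_irrefl _ h4
  · change f e = f m
    linarith
  · change f e' = f m
    linarith

lemma not_collinear_extreme {K : Set (Euc 3)} {x y z : Euc 3}
    (hx : x ∈ Set.extremePoints ℝ K) (hy : y ∈ Set.extremePoints ℝ K)
    (hz : z ∈ Set.extremePoints ℝ K) (hxy : x ≠ y) (hyz : y ≠ z) (hxz : x ≠ z) :
    ¬ Collinear ℝ ({x, y, z} : Set (Euc 3)) := by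
  have key : ∀ a b c : Euc 3, a ∈ K → b ∈ Set.extremePoints ℝ K → c ∈ K → a ≠ b → b ≠ c →
      ¬ Wbtw ℝ a b c := by
    intro a b c ha hb hc hab hbc h
    have h1 : b ∈ segment ℝ a c := mem_segment_iff_wbtw.2 h
    rcases (mem_extremePoints_iff_forall_segment.1 hb).2 a ha c hc h1 with h | h
    exacts [hab h, hbc h.symm]
  intro h
  rcases h.wbtw_or_wbtw_or_wbtw with h | h | h
  · exact key x y z hx.1 hy hz.1 hxy hyz h
  · exact key y z x hy.1 hz hx.1 hyz hxz.symm h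
  · exact key z x y hz.1 hx hy.1 hxz.symm hxy h

lemma coplanar_of_level {s : Set (Euc 3)} {f : Euc 3 →ₗ[ℝ] ℝ} {k : ℝ} (hf : f ≠ 0)
    (hs : ∀ x ∈ s, f x = k) : Coplanar ℝ s := by
  have h1 : vectorSpan ℝ s ≤ LinearMap.ker f := by
    rw [vectorSpan_def, Submodule.span_le]
    rintro _ ⟨x, hx, y, hy, rfl⟩
    simp [hs x hx, hs y hy]
  have h2 : Module.finrank ℝ (LinearMap.ker f) < 3 := by
    have := Submodule.finrank_lt (s := LinearMap.ker f) (lt_top_iff_ne_top.2 (by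
      rw [Ne, LinearMap.ker_eq_top]
      exact hf)).ne
    simpa using this
  have h3 := Submodule.finrank_mono h1
  rw [coplanar_iff_finrank_le_two]
  omega

/-- A set without five distinct points is covered by four points. -/
lemma five_or_cover {α : Type*} [Nonempty α] (E : Set α) :
    (∃ a ∈ E, ∃ b ∈ E, ∃ c ∈ E, ∃ d ∈ E, ∃ e ∈ E, [a, b, c, d, e].Nodup) ∨
      ∃ a b c d, ∀ x ∈ E, x = a ∨ x = b ∨ x = c ∨ x = d := by
  by_contra! h
  obtain ⟨h1, h2⟩ := h
  obtain ⟨o⟩ := ‹Nonempty α›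
  obtain ⟨a, ha, -⟩ := h2 o o o o
  obtain ⟨b, hb, hba, -⟩ := h2 a a a a
  obtain ⟨c, hc, hca, hcb, -⟩ := h2 a b b b
  obtain ⟨d, hd, hda, hdb, hdc, -⟩ := h2 a b c c
  obtain ⟨e, he, hea, heb, hec, hed⟩ := h2 a b c d
  refine h1 a ha b hb c hc d hd e he ?_
  simp [hba.symm, hca.symm, hcb.symm, hda.symm, hdb.symm, hdc.symm, hea.symm, heb.symm,
    hec.symm, hed.symm]

lemma exists_plane_through (a b c : Euc 3) :
    ∃ f : Euc 3 →ₗ[ℝ] ℝ, f ≠ 0 ∧ f b = f a ∧ f c = f a := by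
  have hlt : Submodule.span ℝ ({b - a, c - a} : Set (Euc 3)) < ⊤ := by
    rw [lt_top_iff_ne_top]
    intro h
    have h1 := finrank_span_finset_le_card (R := ℝ) ({b - a, c - a} : Finset (Euc 3))
    have h2 : ({b - a, c - a} : Finset (Euc 3)).card ≤ 2 := Finset.card_le_two
    rw [Finset.coe_pair, Set.finrank, h, finrank_top] at h1
    simp at h1
    omega
  obtain ⟨f, hf, hle⟩ := Submodule.exists_le_ker_of_lt_top _ hlt
  have h1 : f (b - a) = 0 := hle (Submodule.subset_span (by simp))
  have h2 : f (c - a) = 0 := hle (Submodule.subset_span (by simp))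
  rw [map_sub, sub_eq_zero] at h1 h2
  exact ⟨f, hf, h1, h2⟩

end Final

/-! ### The classification -/

/-- Let `Ω` be a (nonempty) open bounded convex set in `ℝ³` which does
not contain an extreme line. Then either `Ω` is a cone, or `Ω` is the interior of the
convex hull of a closed nondegenerate segment `[f₁, f₂]` and a closed convex
quadrilateral `Q` (the convex hull of four coplanar points, no three collinear), where
`f₁` and `f₂` do not lie in the plane containing `Q`. -/
theorem stmt_19 (Ω : Set (Euc 3))
    (hne : Ω.Nonempty) (hop : IsOpen Ω) (hbd : Bornology.IsBounded Ω) (hcv : Convex ℝ Ω)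
    (hnoext : ¬ ∃ L : Set (Euc 3), IsExtremeLine Ω L) :
    IsCone Ω ∨
      ∃ f₁ f₂ q₁ q₂ q₃ q₄ : Euc 3,
        f₁ ≠ f₂ ∧
        Coplanar ℝ ({q₁, q₂, q₃, q₄} : Set (Euc 3)) ∧
        (∀ x y z : Euc 3, x ∈ ({q₁, q₂, q₃, q₄} : Set (Euc 3)) →
          y ∈ ({q₁, q₂, q₃, q₄} : Set (Euc 3)) → z ∈ ({q₁, q₂, q₃, q₄} : Set (Euc 3)) →
          x ≠ y → y ≠ z → x ≠ z → ¬ Collinear ℝ ({x, y, z} : Set (Euc 3))) ∧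
        f₁ ∉ affineSpan ℝ ({q₁, q₂, q₃, q₄} : Set (Euc 3)) ∧
        f₂ ∉ affineSpan ℝ ({q₁, q₂, q₃, q₄} : Set (Euc 3)) ∧
        Ω = interior (convexHull ℝ ({f₁, f₂, q₁, q₂, q₃, q₄} : Set (Euc 3))) := by
  have hK : IsCompact (closure Ω) := hbd.isCompact_closure
  have hKc : Convex ℝ (closure Ω) := hcv.closure
  have hsys := blockSystem hKc fun e he e' he' hee =>
    exists_common_support hne hop hcv hnoext he he' hee
  rcases five_or_cover (Set.extremePoints ℝ (closure Ω)) with h5 | ⟨a, b, c, d, hcov⟩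
  swap
  · left
    obtain ⟨f, hf, hb, hc⟩ := exists_plane_through a b c
    refine isCone_of_plane hne hop hbd hcv hf (k := f a) (v := d) fun e he hed => ?_
    rcases hcov e he with rfl | rfl | rfl | rfl
    exacts [rfl, hb, hc, absurd rfl hed]
  rcases incidence_core hsys h5 with ⟨B, ⟨f, k, hf, -, rfl⟩, v, hv⟩ |
    ⟨B, ⟨f, k, hf, -, rfl⟩, a, b, c, d, x, y, ha, hb, hc, hd, hx, hy, hxy, hE⟩
  · exact Or.inl (isCone_of_plane hne hop hbd hcv hf fun e he hev => (hv e he hev).2)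
  right
  have hQ : ∀ q ∈ ({a, b, c, d} : Set (Euc 3)),
      q ∈ Set.extremePoints ℝ (closure Ω) ∧ f q = k := by
    rintro q (rfl | rfl | rfl | rfl)
    exacts [ha, hb, hc, hd]
  have hxE : x ∈ Set.extremePoints ℝ (closure Ω) := by rw [hE]; simp
  have hyE : y ∈ Set.extremePoints ℝ (closure Ω) := by rw [hE]; simp
  have hspan : ∀ z ∈ affineSpan ℝ ({a, b, c, d} : Set (Euc 3)), f z = k := by
    intro z hz
    refine affineSpan_induction (p := fun x => f x = k) hz (fun q hq => (hQ q hq).2) ?_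
    intro r u w z hu hw hz
    simp [hu, hw, hz]
  refine ⟨x, y, a, b, c, d, hxy, coplanar_of_level hf fun q hq => (hQ q hq).2, ?_, ?_, ?_, ?_⟩
  · intro p q r hp hq hr h1 h2 h3
    exact not_collinear_extreme (hQ p hp).1 (hQ q hq).1 (hQ r hr).1 h1 h2 h3
  · exact fun h => hx ⟨hxE, hspan x h⟩
  · exact fun h => hy ⟨hyE, hspan y h⟩
  · rw [← hE]
    have hfin : (Set.extremePoints ℝ (closure Ω)).Finite := by
      rw [hE]
      exact Set.toFinite _
    have hKM := closure_convexHull_extremePoints hK hKc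
    rw [(hfin.isClosed_convexHull ℝ).closure_eq] at hKM
    rw [hKM, hcv.interior_closure_eq_interior_of_nonempty_interior (𝕜 := ℝ)
      (by rwa [hop.interior_eq]),
      hop.interior_eq]
end
end
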